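/- Let X be a geodesic metric space with basepoint o, let G be a countable group acting on X by isometries containing two independent contracting isometries, and let μ be a non-elementary probability measure on G with L(μ) < ∞. Let η be a signed measure on G with ‖η‖_{0,1} < ∞, and let (μ_t)_{t∈[−1,1]} be a family of probability measures on G with ‖μ_t − μ − tη‖_{0,1} = o(t) as t → 0. Assume the following uniform L¹-Cauchy property of the defects: there exists ε > 0 such that for every ε' > 0 there is N > 0 so that for every family (ν_i)_{i∈ℤ∖{0}} of probability measures with ‖ν_i − μ‖_{0,1} < ε, every g ∈ G, and all n, m, n', m' ≥ N, one has E|R_{n,m} − R_{n',m'}| < ε', where g₀ = g is fixed and the g_i (i ≠ 0) are independent with law ν_i. Then: (a) the limit Δ := lim_{n→∞} ∑_{g₁,g₂,g₃∈G} μ^{*n}(g₁)·η(g₂)·μ^{*n}(g₃)·( d(o,g₁·o) + d(o,g₂·o) + d(o,g₃·o) − d(o,(g₁g₂g₃)·o) ) exists, and (b) t ↦ l(μ_t) is differentiable at t = 0 with derivative ∑_{g∈G} η(g)·d(o,g·o) − Δ. -/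

import Mathlib

open Filter Topology Pointwise

/-- `f` parametrizes a geodesic from `x` to `y` by arclength on `[0, dist x y]`. -/
def IsGeodesicSegment {X : Type*} [MetricSpace X] (f : ℝ → X) (x y : X) : Prop :=
  f 0 = x ∧ f (dist x y) = y ∧
    ∀ s ∈ Set.Icc (0 : ℝ) (dist x y), ∀ t ∈ Set.Icc (0 : ℝ) (dist x y),
      dist (f s) (f t) = |s - t|

/-- `X` is a geodesic metric space: any two points are joined by a geodesic. -/
def IsGeodesicSpace (X : Type*) [MetricSpace X] : Prop :=
  ∀ x y : X, ∃ f : ℝ → X, IsGeodesicSegment f x y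

/-- Nearest-point projection of `x` to the set `A`. -/
def projSet {X : Type*} [MetricSpace X] (A : Set X) (x : X) : Set X :=
  {a ∈ A | dist x a = Metric.infDist x A}

/-- Nearest-point projection of the set `B` to the set `A`. -/
def projSetOf {X : Type*} [MetricSpace X] (A B : Set X) : Set X :=
  ⋃ x ∈ B, projSet A x

/-- A `K`-quasigeodesic indexed by `ℤ`. -/
def IsQuasigeodesicZ {X : Type*} [MetricSpace X] (K : ℝ) (γ : ℤ → X) : Prop :=
  ∀ s t : ℤ, |(s : ℝ) - (t : ℝ)| / K - K ≤ dist (γ s) (γ t) ∧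
    dist (γ s) (γ t) ≤ K * |(s : ℝ) - (t : ℝ)| + K

/-- A `K`-contracting axis indexed by `ℤ`: a `K`-quasigeodesic such that every geodesic
staying `K`-far from it has nearest-point projection of diameter `< K`. -/
def IsContractingAxisZ {X : Type*} [MetricSpace X] (K : ℝ) (γ : ℤ → X) : Prop :=
  IsQuasigeodesicZ K γ ∧
    ∀ (f : ℝ → X) (x y : X), IsGeodesicSegment f x y →
      (∀ t ∈ Set.Icc (0 : ℝ) (dist x y), K ≤ Metric.infDist (f t) (Set.range γ)) →
      EMetric.diam (projSetOf (Set.range γ) (f '' Set.Icc (0 : ℝ) (dist x y)))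
        < ENNReal.ofReal K

/-- The `ℤ`-orbit of the basepoint `o` under powers of `g`. -/
def zorbit {G X : Type*} [Group G] [MetricSpace X] [MulAction G X] (o : X) (g : G) : Set X :=
  Set.range fun i : ℤ => g ^ i • o

/-- `g` is a contracting isometry: its orbit map `i ↦ g^i • o` is a `K`-contracting axis
for some `K > 1`. -/
def IsContractingIsom {G X : Type*} [Group G] [MetricSpace X] [MulAction G X]
    (o : X) (g : G) : Prop :=
  ∃ K : ℝ, 1 < K ∧ IsContractingAxisZ K fun i : ℤ => g ^ i • o

/-- `g` and `h` are independent contracting isometries: both are contracting, and the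
nearest-point projections of each orbit to the other are bounded. -/
def IndependentPair {G X : Type*} [Group G] [MetricSpace X] [MulAction G X]
    (o : X) (g h : G) : Prop :=
  IsContractingIsom o g ∧ IsContractingIsom o h ∧
    Bornology.IsBounded (projSetOf (zorbit o g) (zorbit o h)) ∧
    Bornology.IsBounded (projSetOf (zorbit o h) (zorbit o g))

/-- `G` contains two independent contracting isometries of `X`. -/
def HasIndepContracting (G : Type*) {X : Type*} [Group G] [MetricSpace X] [MulAction G X]
    (o : X) : Prop :=
  ∃ g h : G, IndependentPair o g h

/-- `μ` is a probability measure on the countable group `G`. -/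
def IsProbMeasure {G : Type*} (μ : G → ℝ) : Prop :=
  (∀ g, 0 ≤ μ g) ∧ Summable μ ∧ ∑' g, μ g = 1

/-- Convolution of two (signed) measures on `G`. -/
noncomputable def conv {G : Type*} [Group G] (μ ν : G → ℝ) : G → ℝ :=
  fun g => ∑' h : G, μ h * ν (h⁻¹ * g)

/-- `n`-fold convolution power of `μ`, with `convPow μ 0` the point mass at the identity. -/
noncomputable def convPow {G : Type*} [Group G] (μ : G → ℝ) : ℕ → G → ℝ
  | 0 => ({1} : Set G).indicator fun _ => (1 : ℝ)
  | n + 1 => conv μ (convPow μ n)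

/-- First moment `L(μ) = ∑_g μ(g) d(o, g o)`. -/
noncomputable def firstMoment {G X : Type*} [Group G] [MetricSpace X] [MulAction G X]
    (o : X) (μ : G → ℝ) : ℝ :=
  ∑' g : G, μ g * dist o (g • o)

/-- `μ` has finite first moment. -/
def HasFiniteFirstMoment {G X : Type*} [Group G] [MetricSpace X] [MulAction G X]
    (o : X) (μ : G → ℝ) : Prop :=
  Summable fun g : G => μ g * dist o (g • o)

/-- The escape rate `l(μ) = lim_n L(μ^{*n})/n`; by subadditivity of `n ↦ L(μ^{*n})`
(Fekete), the limit equals the infimum. -/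
noncomputable def escapeRate {G X : Type*} [Group G] [MetricSpace X] [MulAction G X]
    (o : X) (μ : G → ℝ) : ℝ :=
  ⨅ n : ℕ, firstMoment o (convPow μ (n + 1)) / (n + 1 : ℝ)

/-- `μ` is non-elementary: the sub-semigroup generated by its support contains
two independent contracting isometries. -/
def NonElementary {G X : Type*} [Group G] [MetricSpace X] [MulAction G X]
    (o : X) (μ : G → ℝ) : Prop :=
  ∃ g h : G, g ∈ Subsemigroup.closure {x : G | 0 < μ x} ∧
    h ∈ Subsemigroup.closure {x : G | 0 < μ x} ∧ IndependentPair o g h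

/-- The norm `‖η‖₀ + ‖η‖₁ = ∑_g (1 + d(o, g o))|η(g)|`, valued in `ℝ≥0∞` so that
finiteness is recorded. -/
noncomputable def enorm01 {G X : Type*} [Group G] [MetricSpace X] [MulAction G X]
    (o : X) (η : G → ℝ) : ENNReal :=
  ∑' g : G, ENNReal.ofReal ((1 + dist o (g • o)) * |η g|)

/-- `‖F t‖_{0,1} = o(t)` as `t → 0`. -/
def IsLittleO01 {G X : Type*} [Group G] [MetricSpace X] [MulAction G X]
    (o : X) (F : ℝ → G → ℝ) : Prop :=
  ∀ ε : ℝ, 0 < ε → ∃ δ : ℝ, 0 < δ ∧ ∀ t : ℝ, |t| < δ →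
    enorm01 o (F t) ≤ ENNReal.ofReal (ε * |t|)

/-- The defect `d(o,a·o) + d(o,b·o) + d(o,c·o) − d(o,(abc)·o)`. -/
noncomputable def defect {G X : Type*} [Group G] [MetricSpace X] [MulAction G X]
    (o : X) (a b c : G) : ℝ :=
  dist o (a • o) + dist o (b • o) + dist o (c • o) - dist o ((a * b * c) • o)

/-- Product `g_{-m}⋯g_{-1}` of the first `m` negative letters of a longer tuple. -/
def truncNegProd {G : Type*} [Group G] {M : ℕ} (y : Fin M → G) (m : ℕ) : G :=
  ((List.ofFn y).take m).reverse.prod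

/-- Product `g_1⋯g_n` of the first `n` positive letters of a longer tuple. -/
def truncPosProd {G : Type*} [Group G] {N : ℕ} (z : Fin N → G) (n : ℕ) : G :=
  ((List.ofFn z).take n).prod

/-- `E |R_{n,m} − R_{n',m'}|` where `g₀ = g` is fixed and `g_i` has law `ν i` for
`i ≠ 0`. -/
noncomputable def defectDiffExp {G X : Type*} [Group G] [MetricSpace X] [MulAction G X]
    (o : X) (ν : ℤ → G → ℝ) (g : G) (n m n' m' : ℕ) : ℝ :=
  ∑' p : (Fin (max m m') → G) × (Fin (max n n') → G),
    (∏ j : Fin (max m m'), ν (-(((j : ℕ) : ℤ) + 1)) (p.1 j)) *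
      (∏ i : Fin (max n n'), ν (((i : ℕ) : ℤ) + 1) (p.2 i)) *
      |defect o (truncNegProd p.1 m) g (truncPosProd p.2 n) -
        defect o (truncNegProd p.1 m') g (truncPosProd p.2 n')|

/-! Only the length function `p g = d(o, g o)` matters. Trading the steps of a walk of law `α` for
steps of law `β` one at a time, `α^{*k} * α * β^{*j}` becomes `α^{*k} * β * β^{*j}`, and the mean
length drops by `∑ (α - β)(g) (p g - Φ g)`, where `Φ g` is the mean defect at the middle letter `g`.
The Cauchy property makes `Φ` almost independent of `k` and `j` as long as both are large, so
dividing by the number of steps shows that `l(α) - l(μ)` is `∑ (α - μ)(g) (p g - Φ g)` up to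
`o(‖α - μ‖_{0,1})`, with `Φ` the limit of the mean defects for `μ` itself. Hence the escape rate is Fréchet
differentiable at `μ` along integrable probability measures, and the chain rule gives its derivative
along `t ↦ μ_t`. The limit `Δ` is `∑ η(g) Φ g`. -/

open scoped ENNReal

section LExpect

variable {ι κ : Type*}

/-- The expectation `∑ w(i) F(i)` of an extended nonnegative function against nonnegative weights.
Negative weights are replaced by `0`. -/
noncomputable def lexpect (w : ι → ℝ) (F : ι → ℝ≥0∞) : ℝ≥0∞ :=
  ∑' i, ENNReal.ofReal (w i) * F i

lemma lexpect_add (w : ι → ℝ) (F H : ι → ℝ≥0∞) :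
    lexpect w (fun i => F i + H i) = lexpect w F + lexpect w H := by
  simp only [lexpect, mul_add, ENNReal.tsum_add]

lemma lexpect_const_mul (w : ι → ℝ) (c : ℝ≥0∞) (F : ι → ℝ≥0∞) :
    lexpect w (fun i => c * F i) = c * lexpect w F := by
  simp only [lexpect, ← ENNReal.tsum_mul_left, mul_left_comm c]

lemma lexpect_mono (w : ι → ℝ) {F H : ι → ℝ≥0∞} (h : ∀ i, F i ≤ H i) : lexpect w F ≤ lexpect w H :=
  ENNReal.tsum_le_tsum fun i => mul_le_mul_right (h i) _

lemma lexpect_comm (w : ι → ℝ) (v : κ → ℝ) (F : ι → κ → ℝ≥0∞) :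
    lexpect w (fun i => lexpect v (F i)) = lexpect v fun k => lexpect w fun i => F i k := by
  simp only [lexpect, ← ENNReal.tsum_mul_left]
  rw [ENNReal.tsum_comm]
  simp only [mul_left_comm]

lemma lexpect_prod {w : ι → ℝ} (hw : ∀ i, 0 ≤ w i) (v : κ → ℝ) (F : ι × κ → ℝ≥0∞) :
    lexpect (fun q : ι × κ => w q.1 * v q.2) F =
      lexpect w fun i => lexpect v fun k => F (i, k) := by
  simp only [lexpect, ENNReal.tsum_prod', ENNReal.ofReal_mul (hw _), mul_assoc,
    ENNReal.tsum_mul_left]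

lemma lexpect_le_add_tsum_enorm_sub (w v : ι → ℝ) {F : ι → ℝ≥0∞} {C : ℝ≥0∞} (hF : ∀ i, F i ≤ C) :
    lexpect w F ≤ lexpect v F + C * ∑' i, ‖w i - v i‖ₑ := by
  simp only [lexpect, ← ENNReal.tsum_mul_left, ← ENNReal.tsum_add]
  refine ENNReal.tsum_le_tsum fun i => ?_
  have hw : ENNReal.ofReal (w i) ≤ ENNReal.ofReal (v i) + ‖w i - v i‖ₑ := by
    rw [Real.enorm_eq_ofReal_abs]
    refine le_trans (ENNReal.ofReal_le_ofReal ?_) ENNReal.ofReal_add_le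
    linarith [le_abs_self (w i - v i)]
  calc ENNReal.ofReal (w i) * F i ≤ (ENNReal.ofReal (v i) + ‖w i - v i‖ₑ) * F i := by gcongr
    _ = ENNReal.ofReal (v i) * F i + F i * ‖w i - v i‖ₑ := by ring
    _ ≤ ENNReal.ofReal (v i) * F i + C * ‖w i - v i‖ₑ := by gcongr; exact hF i

lemma toReal_lexpect {w : ι → ℝ} (hw : ∀ i, 0 ≤ w i) {F : ι → ℝ≥0∞} (hF : ∀ i, F i ≠ ⊤) :
    (lexpect w F).toReal = ∑' i, w i * (F i).toReal := by
  rw [lexpect, ENNReal.tsum_toReal_eq fun i => ENNReal.mul_ne_top ENNReal.ofReal_ne_top (hF i)]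
  simp only [ENNReal.toReal_mul, ENNReal.toReal_ofReal (hw _)]

lemma summable_mul_toReal_of_lexpect_ne_top {w : ι → ℝ} (hw : ∀ i, 0 ≤ w i) {F : ι → ℝ≥0∞}
    (hF : lexpect w F ≠ ⊤) : Summable fun i => w i * (F i).toReal := by
  simpa only [ENNReal.toReal_mul, ENNReal.toReal_ofReal (hw _)] using ENNReal.summable_toReal hF

lemma lexpect_ofReal_ne_top_iff {w : ι → ℝ} (hw : ∀ i, 0 ≤ w i) {f : ι → ℝ} (hf : ∀ i, 0 ≤ f i) :
    lexpect w (fun i => ENNReal.ofReal (f i)) ≠ ⊤ ↔ Summable fun i => w i * f i := by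
  refine ⟨fun h => ?_, fun h => ?_⟩
  · simpa only [ENNReal.toReal_ofReal (hf _)] using summable_mul_toReal_of_lexpect_ne_top hw h
  · simpa only [lexpect, ENNReal.ofReal_mul (hw _)] using h.tsum_ofReal_ne_top

lemma toReal_lexpect_ofReal {w : ι → ℝ} (hw : ∀ i, 0 ≤ w i) {f : ι → ℝ} (hf : ∀ i, 0 ≤ f i) :
    (lexpect w fun i => ENNReal.ofReal (f i)).toReal = ∑' i, w i * f i := by
  rw [toReal_lexpect hw fun _ => ENNReal.ofReal_ne_top]
  simp only [ENNReal.toReal_ofReal (hf _)]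

lemma abs_toReal_lexpect_sub_le {w : ι → ℝ} (hw : ∀ i, 0 ≤ w i) {f h : ι → ℝ}
    (hf : ∀ i, 0 ≤ f i) (hh : ∀ i, 0 ≤ h i)
    (hf_fin : lexpect w (fun i => ENNReal.ofReal (f i)) ≠ ⊤)
    (hh_fin : lexpect w (fun i => ENNReal.ofReal (h i)) ≠ ⊤) :
    |(lexpect w fun i => ENNReal.ofReal (f i)).toReal -
        (lexpect w fun i => ENNReal.ofReal (h i)).toReal| ≤ ∑' i, w i * |f i - h i| := by
  have hf_sum := (lexpect_ofReal_ne_top_iff hw hf).1 hf_fin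
  have hh_sum := (lexpect_ofReal_ne_top_iff hw hh).1 hh_fin
  have habs : ∀ i, ‖w i * f i - w i * h i‖ = w i * |f i - h i| := fun i => by
    rw [← mul_sub, Real.norm_eq_abs, abs_mul, abs_of_nonneg (hw i)]
  rw [toReal_lexpect_ofReal hw hf, toReal_lexpect_ofReal hw hh, ← hf_sum.tsum_sub hh_sum]
  simpa only [habs, Real.norm_eq_abs] using norm_tsum_le_tsum_norm (hf_sum.sub hh_sum).norm

lemma tsum_prod_mul_lexpect {w : ι → ℝ} (hw : ∀ i, 0 ≤ w i) {η : κ → ℝ} {f : κ → ι → ℝ}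
    (hf : ∀ k i, 0 ≤ f k i) (h_fin : ∀ k, lexpect w (fun i => ENNReal.ofReal (f k i)) ≠ ⊤)
    (hη : Summable fun k => η k * (lexpect w fun i => ENNReal.ofReal (f k i)).toReal) :
    ∑' q : κ × ι, η q.1 * (w q.2 * f q.1 q.2) =
      ∑' k, η k * (lexpect w fun i => ENNReal.ofReal (f k i)).toReal := by
  simp only [toReal_lexpect_ofReal hw (hf _)] at hη ⊢
  have h_inner : ∀ k, Summable fun i => w i * f k i := fun k =>
    (lexpect_ofReal_ne_top_iff hw (hf k)).1 (h_fin k)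
  have h_abs : ∀ k i, |η k * (w i * f k i)| = |η k| * (w i * f k i) := fun k i => by
    rw [abs_mul, abs_of_nonneg (mul_nonneg (hw i) (hf k i))]
  have h_sum : Summable fun q : κ × ι => η q.1 * (w q.2 * f q.1 q.2) := by
    rw [← summable_abs_iff, summable_prod_of_nonneg fun _ => abs_nonneg _]
    simp only [h_abs, tsum_mul_left]
    refine ⟨fun k => (h_inner k).mul_left _, hη.abs.congr fun k => ?_⟩
    rw [abs_mul, abs_of_nonneg (tsum_nonneg fun i => mul_nonneg (hw i) (hf k i))]
  simp only [h_sum.tsum_prod, tsum_mul_left]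

namespace IsProbMeasure

variable {w : ι → ℝ}

lemma lexpect_const (hw : IsProbMeasure w) (c : ℝ≥0∞) : lexpect w (fun _ => c) = c := by
  rw [lexpect, ENNReal.tsum_mul_right, ← ENNReal.ofReal_tsum_of_nonneg hw.1 hw.2.1, hw.2.2,
    ENNReal.ofReal_one, one_mul]

lemma of_lexpect_one (hw : ∀ i, 0 ≤ w i) (h : lexpect w (fun _ => 1) = 1) : IsProbMeasure w := by
  have h_sum := summable_mul_toReal_of_lexpect_ne_top hw (h.trans_ne ENNReal.one_ne_top)
  have h_tsum := toReal_lexpect hw (F := fun _ => 1) fun _ => ENNReal.one_ne_top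
  simp only [h, ENNReal.toReal_one, mul_one] at h_sum h_tsum
  exact ⟨hw, h_sum, h_tsum.symm⟩

lemma le_one (hw : IsProbMeasure w) (i : ι) : w i ≤ 1 :=
  hw.2.2 ▸ hw.2.1.le_tsum i fun j _ => hw.1 j

end IsProbMeasure

end LExpect

section Convolution

variable {G : Type*} [Group G] {α β : G → ℝ}

lemma conv_nonneg (hα : ∀ g, 0 ≤ α g) (hβ : ∀ g, 0 ≤ β g) (g : G) : 0 ≤ conv α β g :=
  tsum_nonneg fun h => mul_nonneg (hα h) (hβ _)

lemma lexpect_conv (hα : IsProbMeasure α) (hβ : IsProbMeasure β) (F : G → ℝ≥0∞) :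
    lexpect (conv α β) F = lexpect α fun a => lexpect β fun b => F (a * b) := by
  have h_nonneg : ∀ g h, 0 ≤ α h * β (h⁻¹ * g) := fun g h => mul_nonneg (hα.1 h) (hβ.1 _)
  have h_sum : ∀ g, Summable fun h => α h * β (h⁻¹ * g) := fun g =>
    hα.2.1.of_nonneg_of_le (h_nonneg g) fun h => mul_le_of_le_one_right (hα.1 h) (hβ.le_one _)
  simp only [lexpect, conv, ENNReal.ofReal_tsum_of_nonneg (h_nonneg _) (h_sum _),
    ENNReal.ofReal_mul (hα.1 _), ← ENNReal.tsum_mul_left, ← ENNReal.tsum_mul_right]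
  rw [ENNReal.tsum_comm]
  refine tsum_congr fun a => ?_
  rw [← (Equiv.mulLeft a).tsum_eq]
  simp only [Equiv.coe_mulLeft, inv_mul_cancel_left, mul_assoc]

lemma lexpect_convPow_zero (α : G → ℝ) (F : G → ℝ≥0∞) : lexpect (convPow α 0) F = F 1 := by
  rw [lexpect, tsum_eq_single 1 fun g hg => by simp [convPow, hg]]
  simp [convPow]

lemma IsProbMeasure.conv (hα : IsProbMeasure α) (hβ : IsProbMeasure β) :
    IsProbMeasure (conv α β) :=
  .of_lexpect_one (conv_nonneg hα.1 hβ.1) <| by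
    rw [lexpect_conv hα hβ]
    simp only [hα.lexpect_const, hβ.lexpect_const]

lemma IsProbMeasure.convPow (hα : IsProbMeasure α) : ∀ n, IsProbMeasure (convPow α n)
  | 0 => .of_lexpect_one (Set.indicator_nonneg fun _ _ => zero_le_one) (lexpect_convPow_zero α _)
  | n + 1 => hα.conv (hα.convPow n)

lemma lexpect_convPow_succ (hα : IsProbMeasure α) (n : ℕ) (F : G → ℝ≥0∞) :
    lexpect (convPow α (n + 1)) F = lexpect α fun a => lexpect (convPow α n) fun b => F (a * b) :=
  lexpect_conv hα (hα.convPow n) F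

lemma lexpect_convPow_add (hα : IsProbMeasure α) (m n : ℕ) (F : G → ℝ≥0∞) :
    lexpect (convPow α (m + n)) F =
      lexpect (convPow α m) fun a => lexpect (convPow α n) fun b => F (a * b) := by
  induction m generalizing F with
  | zero => simp only [zero_add, lexpect_convPow_zero, one_mul]
  | succ m ih => simp only [Nat.succ_add, lexpect_convPow_succ hα, ih, mul_assoc]

lemma lexpect_convPow_one (hα : IsProbMeasure α) (F : G → ℝ≥0∞) :
    lexpect (convPow α 1) F = lexpect α F := by
  simp only [lexpect_convPow_succ hα, lexpect_convPow_zero, mul_one]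

lemma lexpect_convPow_succ' (hα : IsProbMeasure α) (n : ℕ) (F : G → ℝ≥0∞) :
    lexpect (convPow α (n + 1)) F =
      lexpect (convPow α n) fun b => lexpect α fun a => F (b * a) := by
  simp only [lexpect_convPow_add hα, lexpect_convPow_one hα]

lemma lexpect_convPow_le_add (hα : IsProbMeasure α) (hβ : IsProbMeasure β) {C : ℝ≥0∞} (n : ℕ)
    {F : G → ℝ≥0∞} (hF : ∀ g, F g ≤ C) :
    lexpect (convPow α n) F ≤ lexpect (convPow β n) F + n * (C * ∑' g, ‖α g - β g‖ₑ) := by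
  induction n generalizing F with
  | zero => simp only [lexpect_convPow_zero, Nat.cast_zero, zero_mul, add_zero, le_refl]
  | succ n ih =>
    set S := ∑' g, ‖α g - β g‖ₑ
    let H : G → ℝ≥0∞ := fun a => lexpect (convPow β n) fun b => F (a * b)
    have hH : ∀ a, H a ≤ C := fun a =>
      (lexpect_mono _ fun b => hF (a * b)).trans_eq ((hβ.convPow n).lexpect_const C)
    calc lexpect (convPow α (n + 1)) F
        = lexpect α fun a => lexpect (convPow α n) fun b => F (a * b) := lexpect_convPow_succ hα n F
      _ ≤ lexpect α fun a => H a + n * (C * S) := lexpect_mono _ fun a => ih fun b => hF _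
      _ = lexpect α H + n * (C * S) := by rw [lexpect_add, hα.lexpect_const]
      _ ≤ lexpect β H + C * S + n * (C * S) := by
        gcongr
        exact lexpect_le_add_tsum_enorm_sub α β hH
      _ = lexpect (convPow β (n + 1)) F + ↑(n + 1) * (C * S) := by
        rw [lexpect_convPow_succ hβ]
        push_cast
        ring

end Convolution

section Tuples

variable {G : Type*} {β : G → ℝ}

lemma lexpect_tuple_succ (hβ : ∀ g, 0 ≤ β g) {M : ℕ} (F : (Fin (M + 1) → G) → ℝ≥0∞) :
    lexpect (fun z => ∏ i, β (z i)) F =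
      lexpect β fun x => lexpect (fun z : Fin M → G => ∏ i, β (z i)) fun z => F (Fin.cons x z) := by
  refine .trans ?_ (lexpect_prod hβ _ fun q : G × (Fin M → G) => F (Fin.cons q.1 q.2))
  rw [lexpect, ← (Fin.consEquiv fun _ => G).tsum_eq]
  simp only [lexpect, Fin.prod_univ_succ]
  rfl

lemma IsProbMeasure.tuple (hβ : IsProbMeasure β) (M : ℕ) :
    IsProbMeasure fun z : Fin M → G => ∏ i, β (z i) := by
  refine .of_lexpect_one (fun z => Finset.prod_nonneg fun _ _ => hβ.1 _) ?_
  induction M with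
  | zero => simp [lexpect]
  | succ M ih => simp only [lexpect_tuple_succ hβ.1, ih, hβ.lexpect_const]

variable [Group G]

lemma lexpect_truncPosProd (hβ : IsProbMeasure β) {M n : ℕ} (hn : n ≤ M) (F : G → ℝ≥0∞) :
    lexpect (fun z : Fin M → G => ∏ i, β (z i)) (fun z => F (truncPosProd z n)) =
      lexpect (convPow β n) F := by
  induction n generalizing M F with
  | zero =>
    simp only [truncPosProd, List.take_zero, List.prod_nil, lexpect_convPow_zero,
      (hβ.tuple M).lexpect_const]
  | succ n ih =>
    obtain ⟨M, rfl⟩ := Nat.exists_eq_add_of_le' (n.succ_pos.trans_le hn)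
    have h_cons : ∀ x (z : Fin M → G),
        truncPosProd (Fin.cons x z : Fin (M + 1) → G) (n + 1) = x * truncPosProd z n := by
      simp [truncPosProd]
    simp only [lexpect_tuple_succ hβ.1, h_cons, lexpect_convPow_succ hβ]
    exact congrArg _ (funext fun x => ih (Nat.le_of_succ_le_succ hn) fun g => F (x * g))

lemma lexpect_truncNegProd (hβ : IsProbMeasure β) {M n : ℕ} (hn : n ≤ M) (F : G → ℝ≥0∞) :
    lexpect (fun y : Fin M → G => ∏ i, β (y i)) (fun y => F (truncNegProd y n)) =
      lexpect (convPow β n) F := by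
  induction n generalizing M F with
  | zero =>
    simp only [truncNegProd, List.take_zero, List.reverse_nil, List.prod_nil, lexpect_convPow_zero,
      (hβ.tuple M).lexpect_const]
  | succ n ih =>
    obtain ⟨M, rfl⟩ := Nat.exists_eq_add_of_le' (n.succ_pos.trans_le hn)
    have h_cons : ∀ x (y : Fin M → G),
        truncNegProd (Fin.cons x y : Fin (M + 1) → G) (n + 1) = truncNegProd y n * x := by
      simp [truncNegProd]
    simp only [lexpect_tuple_succ hβ.1, h_cons, lexpect_convPow_succ' hβ, lexpect_comm _ β]
    exact congrArg _ (funext fun x => ih (Nat.le_of_succ_le_succ hn) fun g => F (g * x))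

end Tuples

section Length

variable {G : Type*} [Group G] {p : GroupSeminorm G} {α β : G → ℝ}

/-- The first moment of `α` for the length function `p`, valued in `ℝ≥0∞` so that finiteness is
recorded. -/
noncomputable def lmeanLength (p : GroupSeminorm G) (α : G → ℝ) : ℝ≥0∞ :=
  lexpect α fun g => ENNReal.ofReal (p g)

/-- The first moment of `α` for the length function `p`, with value `0` if it is infinite. -/
noncomputable def meanLength (p : GroupSeminorm G) (α : G → ℝ) : ℝ := (lmeanLength p α).toReal

/-- The escape rate of the random walk with step law `α`, measured by the length function `p`. -/
noncomputable def drift (p : GroupSeminorm G) (α : G → ℝ) : ℝ :=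
  ⨅ n : ℕ, meanLength p (convPow α (n + 1)) / (n + 1 : ℝ)

/-- `α` is a probability measure with finite first moment for the length function `p`. -/
structure IsIntegrableProb (p : GroupSeminorm G) (α : G → ℝ) : Prop where
  prob : IsProbMeasure α
  lmeanLength_ne_top : lmeanLength p α ≠ ⊤

lemma meanLength_nonneg (p : GroupSeminorm G) (α : G → ℝ) : 0 ≤ meanLength p α :=
  ENNReal.toReal_nonneg

lemma lmeanLength_convPow_add_le (hα : IsProbMeasure α) (m n : ℕ) :
    lmeanLength p (convPow α (m + n)) ≤
      lmeanLength p (convPow α m) + lmeanLength p (convPow α n) := by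
  calc lmeanLength p (convPow α (m + n))
      = lexpect (convPow α m) fun a => lexpect (convPow α n) fun b => ENNReal.ofReal (p (a * b)) :=
        lexpect_convPow_add hα m n _
    _ ≤ lexpect (convPow α m) fun a => lexpect (convPow α n) fun b =>
          ENNReal.ofReal (p a) + ENNReal.ofReal (p b) :=
        lexpect_mono _ fun a => lexpect_mono _ fun b =>
          (ENNReal.ofReal_le_ofReal (map_mul_le_add p a b)).trans ENNReal.ofReal_add_le
    _ = lmeanLength p (convPow α m) + lmeanLength p (convPow α n) := by
        simp only [lexpect_add, (hα.convPow _).lexpect_const, lmeanLength]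

lemma lmeanLength_convPow_le (hα : IsProbMeasure α) (n : ℕ) :
    lmeanLength p (convPow α n) ≤ n * lmeanLength p α := by
  induction n with
  | zero => simp [lmeanLength, lexpect_convPow_zero]
  | succ n ih =>
    calc lmeanLength p (convPow α (n + 1))
        ≤ lmeanLength p (convPow α n) + lmeanLength p (convPow α 1) :=
          lmeanLength_convPow_add_le hα n 1
      _ ≤ n * lmeanLength p α + lmeanLength p α :=
          add_le_add ih (lexpect_convPow_one hα _).le
      _ = ↑(n + 1) * lmeanLength p α := by
          push_cast
          ring

lemma IsIntegrableProb.convPow (hα : IsIntegrableProb p α) (n : ℕ) :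
    IsIntegrableProb p (convPow α n) where
  prob := hα.prob.convPow n
  lmeanLength_ne_top := ne_top_of_le_ne_top
    (ENNReal.mul_ne_top (ENNReal.natCast_ne_top n) hα.lmeanLength_ne_top)
    (lmeanLength_convPow_le hα.prob n)

lemma meanLength_convPow_le (hα : IsIntegrableProb p α) (n : ℕ) :
    meanLength p (convPow α n) ≤ n * meanLength p α := by
  simpa only [meanLength, ENNReal.toReal_mul, ENNReal.toReal_natCast] using ENNReal.toReal_mono
    (ENNReal.mul_ne_top (ENNReal.natCast_ne_top n) hα.lmeanLength_ne_top)
    (lmeanLength_convPow_le hα.prob n)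

lemma subadditive_meanLength_convPow (hα : IsIntegrableProb p α) :
    Subadditive fun n => meanLength p (convPow α n) := fun m n => by
  have hm := (hα.convPow m).lmeanLength_ne_top
  have hn := (hα.convPow n).lmeanLength_ne_top
  simp only [meanLength]
  rw [← ENNReal.toReal_add hm hn]
  exact ENNReal.toReal_mono (ENNReal.add_ne_top.2 ⟨hm, hn⟩) (lmeanLength_convPow_add_le hα.prob m n)

lemma tendsto_meanLength_convPow_div (hα : IsIntegrableProb p α) :
    Tendsto (fun n : ℕ => meanLength p (convPow α (n + 1)) / (n + 1 : ℝ)) atTop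
      (𝓝 (drift p α)) := by
  set u : ℕ → ℝ := fun n => meanLength p (convPow α n)
  have hu : Subadditive u := subadditive_meanLength_convPow hα
  have h_bdd : BddBelow (Set.range fun n : ℕ => u n / n) :=
    ⟨0, Set.forall_mem_range.2 fun n => div_nonneg (meanLength_nonneg p _) n.cast_nonneg⟩
  have h_lim : hu.lim = drift p α := by
    have h_image : (fun n : ℕ => u n / n) '' Set.Ici 1 =
        Set.range fun n : ℕ => u (n + 1) / (n + 1 : ℝ) := by
      have h_range : Set.range (· + 1) = Set.Ici (1 : ℕ) := Set.ext fun n =>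
        ⟨fun ⟨k, hk⟩ => hk ▸ k.succ_pos, fun hn => ⟨n - 1, Nat.sub_add_cancel hn⟩⟩
      rw [← h_range, ← Set.range_comp]
      simp only [Function.comp_def, Nat.cast_add, Nat.cast_one]
    rw [Subadditive.lim, h_image, sInf_range, drift]
  simpa only [h_lim, Function.comp_def, Nat.cast_add, Nat.cast_one] using
    (hu.tendsto_lim h_bdd).comp (tendsto_add_atTop_nat 1)

end Length

section Norm

variable {G : Type*} [Group G] {p : GroupSeminorm G} {σ τ α β : G → ℝ}

/-- Finiteness of the norm `‖σ‖_{0,1}` of a signed measure, for the length function `p`. -/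
def HasFiniteNorm01 (p : GroupSeminorm G) (σ : G → ℝ) : Prop :=
  Summable fun g => (1 + p g) * |σ g|

/-- The norm `‖σ‖_{0,1}` of a signed measure, for the length function `p`. -/
noncomputable def norm01 (p : GroupSeminorm G) (σ : G → ℝ) : ℝ :=
  ∑' g, (1 + p g) * |σ g|

lemma one_add_seminorm_mul_abs_nonneg (p : GroupSeminorm G) (σ : G → ℝ) (g : G) :
    0 ≤ (1 + p g) * |σ g| :=
  mul_nonneg (add_nonneg zero_le_one (apply_nonneg p g)) (abs_nonneg _)

lemma norm01_nonneg (p : GroupSeminorm G) (σ : G → ℝ) : 0 ≤ norm01 p σ :=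
  tsum_nonneg (one_add_seminorm_mul_abs_nonneg p σ)

lemma norm01_sub_comm (p : GroupSeminorm G) (σ τ : G → ℝ) :
    norm01 p (σ - τ) = norm01 p (τ - σ) := by
  simp only [norm01, Pi.sub_apply, abs_sub_comm]

lemma norm01_zero (p : GroupSeminorm G) : norm01 p 0 = 0 := by simp [norm01]

lemma hasFiniteNorm01_iff : HasFiniteNorm01 p σ ↔ Summable fun g => (1 + p g) * σ g := by
  rw [← summable_abs_iff]
  simp only [abs_mul, abs_of_nonneg (add_nonneg zero_le_one (apply_nonneg p _)), HasFiniteNorm01]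

lemma norm_mul_le_of_abs_le {f : G → ℝ} {C : ℝ} (hf : ∀ g, |f g| ≤ C * (1 + p g)) (σ : G → ℝ)
    (g : G) : ‖σ g * f g‖ ≤ C * ((1 + p g) * |σ g|) := by
  rw [norm_mul, Real.norm_eq_abs, Real.norm_eq_abs, ← mul_assoc, mul_comm]
  exact mul_le_mul_of_nonneg_right (hf g) (abs_nonneg _)

namespace HasFiniteNorm01

lemma add (hσ : HasFiniteNorm01 p σ) (hτ : HasFiniteNorm01 p τ) : HasFiniteNorm01 p (σ + τ) := by
  rw [hasFiniteNorm01_iff] at *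
  simpa only [Pi.add_apply, mul_add] using hσ.add hτ

lemma sub (hσ : HasFiniteNorm01 p σ) (hτ : HasFiniteNorm01 p τ) : HasFiniteNorm01 p (σ - τ) := by
  rw [hasFiniteNorm01_iff] at *
  simpa only [Pi.sub_apply, mul_sub] using hσ.sub hτ

lemma smul (hσ : HasFiniteNorm01 p σ) (c : ℝ) : HasFiniteNorm01 p (c • σ) := by
  rw [hasFiniteNorm01_iff] at *
  simpa only [Pi.smul_apply, smul_eq_mul, mul_left_comm] using hσ.mul_left c

lemma norm01_add_le (hσ : HasFiniteNorm01 p σ) (hτ : HasFiniteNorm01 p τ) :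
    norm01 p (σ + τ) ≤ norm01 p σ + norm01 p τ := by
  rw [norm01, norm01, norm01, ← hσ.tsum_add hτ]
  refine (hσ.add hτ).tsum_le_tsum (fun g => ?_) (Summable.add hσ hτ)
  rw [← mul_add]
  exact mul_le_mul_of_nonneg_left (abs_add_le _ _) (add_nonneg zero_le_one (apply_nonneg p g))

lemma summable_mul (hσ : HasFiniteNorm01 p σ) {f : G → ℝ} {C : ℝ}
    (hf : ∀ g, |f g| ≤ C * (1 + p g)) : Summable fun g => σ g * f g :=
  .of_norm_bounded (hσ.mul_left C) (norm_mul_le_of_abs_le hf σ)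

lemma abs_tsum_mul_le (hσ : HasFiniteNorm01 p σ) {f : G → ℝ} {C : ℝ}
    (hf : ∀ g, |f g| ≤ C * (1 + p g)) : |∑' g, σ g * f g| ≤ C * norm01 p σ :=
  tsum_mul_left (a := C) ▸ tsum_of_norm_bounded (hσ.mul_left C).hasSum (norm_mul_le_of_abs_le hf σ)

lemma abs_tsum_mul_sub_tsum_mul_le (hσ : HasFiniteNorm01 p σ) {f h : G → ℝ} {A B C : ℝ}
    (hf : ∀ g, |f g| ≤ A * (1 + p g)) (hh : ∀ g, |h g| ≤ B * (1 + p g))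
    (hfh : ∀ g, |f g - h g| ≤ C * (1 + p g)) :
    |∑' g, σ g * f g - ∑' g, σ g * h g| ≤ C * norm01 p σ := by
  rw [← (hσ.summable_mul hf).tsum_sub (hσ.summable_mul hh)]
  simpa only [mul_sub] using hσ.abs_tsum_mul_le hfh

end HasFiniteNorm01

lemma norm01_smul (p : GroupSeminorm G) (c : ℝ) (σ : G → ℝ) :
    norm01 p (c • σ) = |c| * norm01 p σ := by
  simp only [norm01, Pi.smul_apply, smul_eq_mul, abs_mul, mul_left_comm _ |c|, tsum_mul_left]

lemma HasFiniteNorm01.tsum_enorm_le (hσ : HasFiniteNorm01 p σ) :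
    ∑' g, ‖σ g‖ₑ ≤ ENNReal.ofReal (norm01 p σ) := by
  rw [norm01, ENNReal.ofReal_tsum_of_nonneg (one_add_seminorm_mul_abs_nonneg p σ) hσ]
  refine ENNReal.tsum_le_tsum fun g => ?_
  rw [Real.enorm_eq_ofReal_abs]
  refine ENNReal.ofReal_le_ofReal (le_mul_of_one_le_left (abs_nonneg _) ?_)
  linarith [apply_nonneg p g]

lemma isIntegrableProb_iff (hα : IsProbMeasure α) :
    IsIntegrableProb p α ↔ HasFiniteNorm01 p α := by
  have h_iff : IsIntegrableProb p α ↔ Summable fun g => α g * p g :=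
    ⟨fun h => (lexpect_ofReal_ne_top_iff hα.1 (apply_nonneg p)).1 h.lmeanLength_ne_top,
      fun h => ⟨hα, (lexpect_ofReal_ne_top_iff hα.1 (apply_nonneg p)).2 h⟩⟩
  rw [h_iff, hasFiniteNorm01_iff]
  simp only [add_mul, one_mul, mul_comm (p _)]
  exact ⟨hα.2.1.add, fun h => by simpa only [add_sub_cancel_left] using h.sub hα.2.1⟩

lemma IsIntegrableProb.hasFiniteNorm01 (hα : IsIntegrableProb p α) : HasFiniteNorm01 p α :=
  (isIntegrableProb_iff hα.prob).1 hα

end Norm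

section Defect

variable {G : Type*} [Group G] {p : GroupSeminorm G} {α β σ : G → ℝ}

/-- The loss of length in the product `a * b * c`, for the length function `p`. -/
def groupDefect (p : GroupSeminorm G) (a b c : G) : ℝ := p a + p b + p c - p (a * b * c)

/-- The mean defect of a middle letter `g` surrounded by independent letters of laws `α` and `β`,
valued in `ℝ≥0∞` so that finiteness is recorded. -/
noncomputable def lmeanDefect (p : GroupSeminorm G) (α β : G → ℝ) (g : G) : ℝ≥0∞ :=
  lexpect α fun a => lexpect β fun c => ENNReal.ofReal (groupDefect p a g c)

/-- The mean defect of a middle letter `g` surrounded by independent letters of laws `α` and `β`,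
with value `0` if it is infinite. -/
noncomputable def meanDefect (p : GroupSeminorm G) (α β : G → ℝ) (g : G) : ℝ :=
  (lmeanDefect p α β g).toReal

lemma groupDefect_nonneg (p : GroupSeminorm G) (a b c : G) : 0 ≤ groupDefect p a b c := by
  rw [groupDefect]
  linarith [map_mul_le_add p a b, map_mul_le_add p (a * b) c]

lemma groupDefect_le_right (p : GroupSeminorm G) (a b c : G) :
    groupDefect p a b c ≤ 2 * (p b + p c) := by
  have h := map_mul_le_add p (a * (b * c)) (b * c)⁻¹
  rw [map_inv_eq_map, mul_inv_cancel_right] at h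
  rw [groupDefect, mul_assoc]
  linarith [map_mul_le_add p b c]

lemma groupDefect_le_left (p : GroupSeminorm G) (a b c : G) :
    groupDefect p a b c ≤ 2 * (p b + p a) := by
  rw [groupDefect]
  have h := map_mul_le_add p (a * b)⁻¹ (a * b * c)
  rw [map_inv_eq_map, inv_mul_cancel_left] at h
  linarith [map_mul_le_add p a b]

lemma meanDefect_nonneg (p : GroupSeminorm G) (α β : G → ℝ) (g : G) : 0 ≤ meanDefect p α β g :=
  ENNReal.toReal_nonneg

lemma lexpect_ofReal_two_mul_add (hβ : IsIntegrableProb p β) (g : G) :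
    lexpect β (fun c => ENNReal.ofReal (2 * (p g + p c))) =
      ENNReal.ofReal (2 * (p g + meanLength p β)) := by
  simp only [ENNReal.ofReal_mul zero_le_two, ENNReal.ofReal_add (apply_nonneg p g)
    (apply_nonneg p _), lexpect_const_mul, lexpect_add, hβ.prob.lexpect_const]
  rw [ENNReal.ofReal_add (apply_nonneg p g) (meanLength_nonneg p β), meanLength,
    ENNReal.ofReal_toReal hβ.lmeanLength_ne_top, lmeanLength]

lemma lexpect_groupDefect_le (hβ : IsIntegrableProb p β) (a g : G) :
    lexpect β (fun c => ENNReal.ofReal (groupDefect p a g c)) ≤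
      ENNReal.ofReal (2 * (p g + meanLength p β)) :=
  (lexpect_mono β fun c => ENNReal.ofReal_le_ofReal (groupDefect_le_right p a g c)).trans_eq
    (lexpect_ofReal_two_mul_add hβ g)

lemma lmeanDefect_le (hα : IsProbMeasure α) (hβ : IsIntegrableProb p β) (g : G) :
    lmeanDefect p α β g ≤ ENNReal.ofReal (2 * (p g + meanLength p β)) :=
  (lexpect_mono α fun a => lexpect_groupDefect_le hβ a g).trans_eq (hα.lexpect_const _)

lemma lmeanDefect_ne_top (hα : IsProbMeasure α) (hβ : IsIntegrableProb p β) (g : G) :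
    lmeanDefect p α β g ≠ ⊤ :=
  ne_top_of_le_ne_top ENNReal.ofReal_ne_top (lmeanDefect_le hα hβ g)

lemma meanDefect_le_right (hα : IsProbMeasure α) (hβ : IsIntegrableProb p β) (g : G) :
    meanDefect p α β g ≤ 2 * (p g + meanLength p β) :=
  ENNReal.toReal_le_of_le_ofReal
    (mul_nonneg zero_le_two (add_nonneg (apply_nonneg p g) (meanLength_nonneg p β)))
    (lmeanDefect_le hα hβ g)

lemma meanDefect_le_left (hα : IsIntegrableProb p α) (hβ : IsProbMeasure β) (g : G) :
    meanDefect p α β g ≤ 2 * (p g + meanLength p α) := by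
  refine ENNReal.toReal_le_of_le_ofReal
    (mul_nonneg zero_le_two (add_nonneg (apply_nonneg p g) (meanLength_nonneg p α))) ?_
  calc lmeanDefect p α β g
      ≤ lexpect α fun a => lexpect β fun _ => ENNReal.ofReal (2 * (p g + p a)) :=
        lexpect_mono α fun a => lexpect_mono β fun c =>
          ENNReal.ofReal_le_ofReal (groupDefect_le_left p a g c)
    _ = ENNReal.ofReal (2 * (p g + meanLength p α)) := by
        simp only [hβ.lexpect_const, lexpect_ofReal_two_mul_add hα]

lemma lexpect_mul_mul_add_lmeanDefect (hα : IsProbMeasure α) (hβ : IsProbMeasure β) (g : G) :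
    lexpect α (fun a => lexpect β fun c => ENNReal.ofReal (p (a * g * c))) + lmeanDefect p α β g =
      lmeanLength p α + ENNReal.ofReal (p g) + lmeanLength p β := by
  have h_split : ∀ a c, ENNReal.ofReal (p (a * g * c)) + ENNReal.ofReal (groupDefect p a g c) =
      ENNReal.ofReal (p a) + ENNReal.ofReal (p g) + ENNReal.ofReal (p c) := fun a c => by
    rw [← ENNReal.ofReal_add (apply_nonneg p _) (groupDefect_nonneg p a g c),
      ← ENNReal.ofReal_add (apply_nonneg p a) (apply_nonneg p g),
      ← ENNReal.ofReal_add (add_nonneg (apply_nonneg p a) (apply_nonneg p g)) (apply_nonneg p c),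
      groupDefect, add_sub_cancel]
  rw [lmeanDefect, ← lexpect_add]
  simp only [← lexpect_add, h_split]
  simp only [lexpect_add, hα.lexpect_const, hβ.lexpect_const, lmeanLength]

lemma lexpect_mul_mul_ne_top (hα : IsIntegrableProb p α) (hβ : IsIntegrableProb p β) (g : G) :
    lexpect α (fun a => lexpect β fun c => ENNReal.ofReal (p (a * g * c))) ≠ ⊤ :=
  ne_top_of_le_ne_top
    (ENNReal.add_ne_top.2 ⟨ENNReal.add_ne_top.2 ⟨hα.lmeanLength_ne_top, ENNReal.ofReal_ne_top⟩,
      hβ.lmeanLength_ne_top⟩)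
    (le_self_add.trans_eq (lexpect_mul_mul_add_lmeanDefect hα.prob hβ.prob g))

lemma toReal_lexpect_mul_mul (hα : IsIntegrableProb p α) (hβ : IsIntegrableProb p β) (g : G) :
    (lexpect α fun a => lexpect β fun c => ENNReal.ofReal (p (a * g * c))).toReal =
      meanLength p α + meanLength p β + (p g - meanDefect p α β g) := by
  have h_add := congrArg ENNReal.toReal
    (lexpect_mul_mul_add_lmeanDefect (p := p) hα.prob hβ.prob g)
  rw [ENNReal.toReal_add (lexpect_mul_mul_ne_top hα hβ g) (lmeanDefect_ne_top hα.prob hβ g),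
    ENNReal.toReal_add (ENNReal.add_ne_top.2 ⟨hα.lmeanLength_ne_top, ENNReal.ofReal_ne_top⟩)
      hβ.lmeanLength_ne_top,
    ENNReal.toReal_add hα.lmeanLength_ne_top ENNReal.ofReal_ne_top,
    ENNReal.toReal_ofReal (apply_nonneg p g)] at h_add
  rw [meanLength, meanLength, meanDefect]
  linarith

lemma abs_meanDefect_le (hα : IsProbMeasure α) (hβ : IsIntegrableProb p β) (g : G) :
    |meanDefect p α β g| ≤ 2 * (1 + meanLength p β) * (1 + p g) := by
  rw [abs_of_nonneg (meanDefect_nonneg p α β g)]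
  nlinarith [meanDefect_le_right hα hβ g, apply_nonneg p g,
    mul_nonneg (meanLength_nonneg p β) (apply_nonneg p g)]

lemma abs_sub_meanDefect_le (hα : IsProbMeasure α) (hβ : IsIntegrableProb p β) (g : G) :
    |p g - meanDefect p α β g| ≤ (1 + 2 * meanLength p β) * (1 + p g) := by
  have hp := apply_nonneg p g
  have hβ_nonneg := meanLength_nonneg p β
  have h_le := meanDefect_le_right hα hβ g
  have h_nonneg := meanDefect_nonneg p α β g
  rw [abs_le]
  constructor <;> nlinarith [mul_nonneg hβ_nonneg hp]

lemma meanLength_conv_conv (hα : IsIntegrableProb p α) (hσ : IsIntegrableProb p σ)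
    (hβ : IsIntegrableProb p β) :
    meanLength p (conv (conv α σ) β) =
      meanLength p α + meanLength p β + ∑' g, σ g * (p g - meanDefect p α β g) := by
  have h_lexpect : lmeanLength p (conv (conv α σ) β) =
      lexpect σ fun g => lexpect α fun a => lexpect β fun c => ENNReal.ofReal (p (a * g * c)) := by
    rw [lmeanLength, lexpect_conv (hα.prob.conv hσ.prob) hβ.prob, lexpect_conv hα.prob hσ.prob,
      lexpect_comm]
  have h_sum : Summable fun g => σ g * (p g - meanDefect p α β g) :=
    hσ.hasFiniteNorm01.summable_mul (abs_sub_meanDefect_le hα.prob hβ)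
  rw [meanLength, h_lexpect, toReal_lexpect hσ.prob.1 (lexpect_mul_mul_ne_top hα hβ)]
  simp only [toReal_lexpect_mul_mul hα hβ, mul_add (σ _) (_ + _)]
  rw [(hσ.prob.2.1.mul_right _).tsum_add h_sum, tsum_mul_right, hσ.prob.2.2, one_mul]

lemma lexpect_tuples_groupDefect (hα : IsProbMeasure α) (hβ : IsProbMeasure β) {M N m n : ℕ}
    (hm : m ≤ M) (hn : n ≤ N) (g : G) :
    lexpect (fun q : (Fin M → G) × (Fin N → G) => (∏ j, α (q.1 j)) * ∏ i, β (q.2 i))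
        (fun q => ENNReal.ofReal (groupDefect p (truncNegProd q.1 m) g (truncPosProd q.2 n))) =
      lmeanDefect p (convPow α m) (convPow β n) g := by
  rw [lmeanDefect, ← lexpect_truncNegProd hα hm]
  simp only [← lexpect_truncPosProd hβ hn]
  exact lexpect_prod (hα.tuple M).1 (fun z : Fin N → G => ∏ i, β (z i)) _

lemma abs_meanDefect_convPow_sub_le_tsum (hα : IsProbMeasure α) (hβ : IsIntegrableProb p β)
    {M N m n m' n' : ℕ} (hm : m ≤ M) (hn : n ≤ N) (hm' : m' ≤ M) (hn' : n' ≤ N) (g : G) :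
    |meanDefect p (convPow α m) (convPow β n) g - meanDefect p (convPow α m') (convPow β n') g| ≤
      ∑' q : (Fin M → G) × (Fin N → G), (∏ j, α (q.1 j)) * (∏ i, β (q.2 i)) *
        |groupDefect p (truncNegProd q.1 m) g (truncPosProd q.2 n) -
          groupDefect p (truncNegProd q.1 m') g (truncPosProd q.2 n')| := by
  have h_first := lexpect_tuples_groupDefect (p := p) hα hβ.prob hm hn g
  have h_second := lexpect_tuples_groupDefect (p := p) hα hβ.prob hm' hn' g
  have h_weight : ∀ q : (Fin M → G) × (Fin N → G), 0 ≤ (∏ j, α (q.1 j)) * ∏ i, β (q.2 i) :=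
    fun q => mul_nonneg ((hα.tuple M).1 q.1) ((hβ.prob.tuple N).1 q.2)
  rw [meanDefect, meanDefect, ← h_first, ← h_second]
  exact abs_toReal_lexpect_sub_le h_weight (fun q => groupDefect_nonneg p _ g _)
    (fun q => groupDefect_nonneg p _ g _)
    (h_first.trans_ne (lmeanDefect_ne_top (hα.convPow m) (hβ.convPow n) g))
    (h_second.trans_ne (lmeanDefect_ne_top (hα.convPow m') (hβ.convPow n') g))

lemma tsum_mul_groupDefect (hα : IsProbMeasure α) (hβ : IsIntegrableProb p β)
    (hσ : HasFiniteNorm01 p σ) :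
    ∑' q : G × G × G, α q.1 * σ q.2.1 * β q.2.2 * groupDefect p q.1 q.2.1 q.2.2 =
      ∑' g, σ g * meanDefect p α β g := by
  let swap : G × G × G → G × G × G := fun q => (q.2.1, q.1, q.2.2)
  have h_swap : Function.Involutive swap := fun _ => rfl
  have h_prod : ∀ g, lmeanDefect p α β g = lexpect (fun r : G × G => α r.1 * β r.2)
      fun r => ENNReal.ofReal (groupDefect p r.1 g r.2) := fun g =>
    (lexpect_prod hα.1 β fun r : G × G => ENNReal.ofReal (groupDefect p r.1 g r.2)).symm
  have h_sum : Summable fun g => σ g * meanDefect p α β g :=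
    hσ.summable_mul (abs_meanDefect_le hα hβ)
  simp only [meanDefect, h_prod] at h_sum ⊢
  rw [← tsum_prod_mul_lexpect (fun r : G × G => mul_nonneg (hα.1 r.1) (hβ.prob.1 r.2))
    (fun g r => groupDefect_nonneg p r.1 g r.2)
    (fun g => h_prod g ▸ lmeanDefect_ne_top hα hβ g) h_sum, ← h_swap.toPerm.tsum_eq]
  refine tsum_congr fun q => ?_
  simp only [Function.Involutive.coe_toPerm, swap]
  ring

end Defect

section AntidiagonalAverages

open Finset.HasAntidiagonal (antidiagonal)

variable {a : ℕ → ℕ → ℝ} {b E K : ℝ} {N : ℕ}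

/-- Only the at most `2 * N` terms with an index below `N` escape the bulk bound `E`. -/
lemma abs_sum_antidiagonal_sub_le (hE : 0 ≤ E) (hK : 0 ≤ K)
    (h_bulk : ∀ i j, N ≤ i → N ≤ j → |a i j - b| ≤ E)
    (h_boundary : ∀ i j, i < N ∨ j < N → |a i j - b| ≤ K) (n : ℕ) :
    |∑ q ∈ antidiagonal n, (a q.1 q.2 - b)| ≤ (n + 1) * E + 2 * (N * K) := by
  have h_term : ∀ q : ℕ × ℕ, |a q.1 q.2 - b| ≤
      E + ((if q.1 < N then K else 0) + if q.2 < N then K else 0) := fun q => by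
    by_cases h_fst : q.1 < N
    · have := h_boundary q.1 q.2 (.inl h_fst)
      split_ifs <;> linarith
    by_cases h_snd : q.2 < N
    · have := h_boundary q.1 q.2 (.inr h_snd)
      split_ifs
      linarith
    simpa only [h_fst, h_snd, if_false, add_zero] using
      h_bulk q.1 q.2 (not_lt.1 h_fst) (not_lt.1 h_snd)
  have h_card : ∀ f : ℕ × ℕ → ℕ, Set.InjOn f (antidiagonal n) →
      ∑ q ∈ antidiagonal n, (if f q < N then K else 0) ≤ N * K := fun f hf => by
    rw [← Finset.sum_filter, Finset.sum_const, nsmul_eq_mul]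
    refine mul_le_mul_of_nonneg_right (Nat.cast_le.2 ?_) hK
    simpa only [Finset.card_range] using Finset.card_le_card_of_injOn f
      (fun q hq => Finset.mem_coe.2 (Finset.mem_range.2 (Finset.mem_filter.1 hq).2))
      (hf.mono (Finset.coe_subset.2 (Finset.filter_subset _ _)))
  have h_fst := h_card Prod.fst fun _ hx _ hy h =>
    (Finset.HasAntidiagonal.antidiagonal_congr hx hy).2 h
  have h_snd := h_card Prod.snd fun _ hx _ hy h =>
    (Finset.HasAntidiagonal.antidiagonal_congr' hx hy).2 h
  calc |∑ q ∈ antidiagonal n, (a q.1 q.2 - b)|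
      ≤ ∑ q ∈ antidiagonal n,
          (E + ((if q.1 < N then K else 0) + if q.2 < N then K else 0)) :=
        (Finset.abs_sum_le_sum_abs _ _).trans (Finset.sum_le_sum fun q _ => h_term q)
    _ ≤ (n + 1) * E + 2 * (N * K) := by
        simp only [Finset.sum_add_distrib, Finset.sum_const, Finset.Nat.card_antidiagonal,
          nsmul_eq_mul, Nat.cast_add, Nat.cast_one]
        linarith

lemma abs_sub_le_of_tendsto_antidiagonal_average {L : ℝ}
    (hL : Tendsto (fun n : ℕ => (∑ q ∈ antidiagonal n, a q.1 q.2) / (n + 1 : ℝ)) atTop (𝓝 L))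
    (hE : 0 ≤ E) (hK : 0 ≤ K) (h_bulk : ∀ i j, N ≤ i → N ≤ j → |a i j - b| ≤ E)
    (h_boundary : ∀ i j, i < N ∨ j < N → |a i j - b| ≤ K) : |L - b| ≤ E := by
  have h_zero : Tendsto (fun n : ℕ => 2 * (N * K) / (n + 1 : ℝ)) atTop (𝓝 0) := by
    simpa only [Function.comp_def, Nat.cast_add, Nat.cast_one] using
      (tendsto_const_div_atTop_nhds_zero_nat (2 * (N * K))).comp (tendsto_add_atTop_nat 1)
  have h_bound := h_zero.const_add E
  rw [add_zero] at h_bound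
  refine le_of_tendsto_of_tendsto' (hL.sub_const b).abs h_bound fun n => ?_
  have hn : (0 : ℝ) < n + 1 := n.cast_add_one_pos
  have h_eq : (∑ q ∈ antidiagonal n, a q.1 q.2) / (n + 1 : ℝ) - b =
      (∑ q ∈ antidiagonal n, (a q.1 q.2 - b)) / (n + 1 : ℝ) := by
    rw [Finset.sum_sub_distrib, Finset.sum_const, Finset.Nat.card_antidiagonal, nsmul_eq_mul,
      sub_div, Nat.cast_add_one, mul_div_cancel_left₀ _ hn.ne']
  rw [h_eq, abs_div, abs_of_pos hn, div_le_iff₀ hn, add_mul, div_mul_cancel₀ _ hn.ne', mul_comm E]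
  exact abs_sum_antidiagonal_sub_le hE hK h_bulk h_boundary n

lemma sum_antidiagonal_succ_sub (f : ℕ → ℕ → ℝ) (n : ℕ) :
    ∑ q ∈ antidiagonal n, (f (q.1 + 1) q.2 - f q.1 (q.2 + 1)) = f (n + 1) 0 - f 0 (n + 1) := by
  have h_fst := Finset.Nat.sum_antidiagonal_succ (n := n) (f := fun q => f q.1 q.2)
  have h_snd := Finset.Nat.sum_antidiagonal_succ' (n := n) (f := fun q => f q.1 q.2)
  rw [Finset.sum_sub_distrib]
  linarith

end AntidiagonalAverages

section Comparison

open Finset.HasAntidiagonal (antidiagonal)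

variable {G : Type*} [Group G] {p : GroupSeminorm G} {α β : G → ℝ}

lemma meanLength_conv_convPow_sub (hα : IsIntegrableProb p α) (hβ : IsIntegrableProb p β)
    (m n : ℕ) :
    meanLength p (conv (convPow α (m + 1)) (convPow β n)) -
        meanLength p (conv (convPow α m) (convPow β (n + 1))) =
      ∑' g, (α - β) g * (p g - meanDefect p (convPow α m) (convPow β n) g) := by
  have hα' := hα.prob.convPow
  have hβ' := hβ.prob.convPow
  have h_left : meanLength p (conv (convPow α (m + 1)) (convPow β n)) =
      meanLength p (conv (conv (convPow α m) α) (convPow β n)) := by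
    simp only [meanLength, lmeanLength, lexpect_conv (hα' _) (hβ' _), lexpect_convPow_succ' hα.prob,
      lexpect_conv ((hα' m).conv hα.prob) (hβ' _), lexpect_conv (hα' _) hα.prob]
  have h_right : meanLength p (conv (convPow α m) (convPow β (n + 1))) =
      meanLength p (conv (conv (convPow α m) β) (convPow β n)) := by
    simp only [meanLength, lmeanLength, lexpect_conv (hα' _) (hβ' _), lexpect_convPow_succ hβ.prob,
      lexpect_conv ((hα' m).conv hβ.prob) (hβ' _), lexpect_conv (hα' _) hβ.prob, mul_assoc]
  have h_bound := abs_sub_meanDefect_le (hα' m) (hβ.convPow n)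
  rw [h_left, h_right, meanLength_conv_conv (hα.convPow m) hα (hβ.convPow n),
    meanLength_conv_conv (hα.convPow m) hβ (hβ.convPow n), add_sub_add_left_eq_sub,
    ← (hα.hasFiniteNorm01.summable_mul h_bound).tsum_sub (hβ.hasFiniteNorm01.summable_mul h_bound)]
  simp only [Pi.sub_apply, sub_mul]

lemma sum_antidiagonal_tsum_mul_sub_meanDefect (hα : IsIntegrableProb p α)
    (hβ : IsIntegrableProb p β) (n : ℕ) :
    ∑ q ∈ antidiagonal n,
        ∑' g, (α - β) g * (p g - meanDefect p (convPow α q.1) (convPow β q.2) g) =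
      meanLength p (convPow α (n + 1)) - meanLength p (convPow β (n + 1)) := by
  simp only [← meanLength_conv_convPow_sub hα hβ]
  rw [sum_antidiagonal_succ_sub fun i j => meanLength p (conv (convPow α i) (convPow β j))]
  simp only [meanLength, lmeanLength, lexpect_conv (hα.prob.convPow _) (hβ.prob.convPow _),
    lexpect_convPow_zero, mul_one, one_mul]

lemma abs_meanDefect_convPow_le (hα : IsIntegrableProb p α) (hβ : IsIntegrableProb p β) {N k j : ℕ}
    (h : k ≤ N ∨ j ≤ N) (g : G) :
    |meanDefect p (convPow α k) (convPow β j) g| ≤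
      2 * (1 + N * (meanLength p α + meanLength p β)) * (1 + p g) := by
  have hα_nonneg := meanLength_nonneg p α
  have hβ_nonneg := meanLength_nonneg p β
  have h_bound : meanDefect p (convPow α k) (convPow β j) g ≤
      2 * (p g + N * (meanLength p α + meanLength p β)) := by
    rcases h with hk | hj
    · calc meanDefect p (convPow α k) (convPow β j) g
          ≤ 2 * (p g + meanLength p (convPow α k)) :=
            meanDefect_le_left (hα.convPow k) (hβ.prob.convPow j) g
        _ ≤ 2 * (p g + k * meanLength p α) := by
            gcongr
            exact meanLength_convPow_le hα k
        _ ≤ 2 * (p g + N * (meanLength p α + meanLength p β)) := by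
            gcongr
            exact le_add_of_nonneg_right hβ_nonneg
    · calc meanDefect p (convPow α k) (convPow β j) g
          ≤ 2 * (p g + meanLength p (convPow β j)) :=
            meanDefect_le_right (hα.prob.convPow k) (hβ.convPow j) g
        _ ≤ 2 * (p g + j * meanLength p β) := by
            gcongr
            exact meanLength_convPow_le hβ j
        _ ≤ 2 * (p g + N * (meanLength p α + meanLength p β)) := by
            gcongr
            exact le_add_of_nonneg_left hα_nonneg
  rw [abs_of_nonneg (meanDefect_nonneg _ _ _ g)]
  have hN : 0 ≤ N * (meanLength p α + meanLength p β) := by positivity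
  nlinarith [mul_nonneg hN (apply_nonneg p g), apply_nonneg p g]

lemma abs_drift_sub_drift_sub_le (hα : IsIntegrableProb p α) (hβ : IsIntegrableProb p β) {N : ℕ}
    {e : ℝ} (h_cauchy : ∀ k j, N ≤ k → N ≤ j → ∀ g, |meanDefect p (convPow α k) (convPow β j) g -
      meanDefect p (convPow α N) (convPow β N) g| ≤ e) :
    |drift p α - drift p β -
        ∑' g, (α - β) g * (p g - meanDefect p (convPow α N) (convPow β N) g)| ≤
      e * norm01 p (α - β) := by
  have he : 0 ≤ e := (abs_nonneg _).trans (h_cauchy N N le_rfl le_rfl 1)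
  have hσ : HasFiniteNorm01 p (α - β) := hα.hasFiniteNorm01.sub hβ.hasFiniteNorm01
  have h_lim := (tendsto_meanLength_convPow_div hα).sub (tendsto_meanLength_convPow_div hβ)
  simp only [← sub_div, ← sum_antidiagonal_tsum_mul_sub_meanDefect hα hβ] at h_lim
  have h_bound : ∀ k j g, |p g - meanDefect p (convPow α k) (convPow β j) g| ≤
      (1 + 2 * meanLength p (convPow β j)) * (1 + p g) := fun k j =>
    abs_sub_meanDefect_le (hα.prob.convPow k) (hβ.convPow j)
  have h_diff : ∀ {k j C}, (∀ g, |meanDefect p (convPow α k) (convPow β j) g -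
      meanDefect p (convPow α N) (convPow β N) g| ≤ C * (1 + p g)) →
      |∑' g, (α - β) g * (p g - meanDefect p (convPow α k) (convPow β j) g) -
        ∑' g, (α - β) g * (p g - meanDefect p (convPow α N) (convPow β N) g)| ≤
        C * norm01 p (α - β) := fun {k j} C h =>
    hσ.abs_tsum_mul_sub_tsum_mul_le (h_bound k j) (h_bound N N) fun g => by
      rw [sub_sub_sub_cancel_left, abs_sub_comm]
      exact h g
  have hα_nonneg := meanLength_nonneg p α
  have hβ_nonneg := meanLength_nonneg p β
  refine abs_sub_le_of_tendsto_antidiagonal_average (N := N)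
    (a := fun k j => ∑' g, (α - β) g * (p g - meanDefect p (convPow α k) (convPow β j) g))
    (b := ∑' g, (α - β) g * (p g - meanDefect p (convPow α N) (convPow β N) g))
    h_lim (mul_nonneg he (norm01_nonneg p _))
    (K := 2 * (2 * (1 + N * (meanLength p α + meanLength p β))) * norm01 p (α - β))
    (mul_nonneg (by positivity) (norm01_nonneg p _)) (fun k j hk hj => h_diff fun g => ?_)
    fun k j h => h_diff fun g => ?_
  · exact (h_cauchy k j hk hj g).trans
      (le_mul_of_one_le_right he (le_add_of_nonneg_right (apply_nonneg p g)))
  · have h_N := abs_meanDefect_convPow_le hα hβ (.inl (le_refl N)) (j := N) g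
    have h_kj := abs_meanDefect_convPow_le hα hβ (h.imp le_of_lt le_of_lt) g
    linarith [abs_sub (meanDefect p (convPow α k) (convPow β j) g)
      (meanDefect p (convPow α N) (convPow β N) g)]

end Comparison

section Differentiability

variable {G : Type*} [Group G] {p : GroupSeminorm G} {α β γ μ η : G → ℝ}

lemma meanDefect_convPow_le_add (hα : IsIntegrableProb p α) (hβ : IsIntegrableProb p β)
    (hγ : IsIntegrableProb p γ) (n : ℕ) (g : G) :
    meanDefect p (convPow α n) γ g ≤ meanDefect p (convPow β n) γ g +
      n * (2 * (p g + meanLength p γ) * norm01 p (α - β)) := by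
  have h_nonneg : 0 ≤ 2 * (p g + meanLength p γ) :=
    mul_nonneg zero_le_two (add_nonneg (apply_nonneg p g) (meanLength_nonneg p γ))
  have h_lmean : lmeanDefect p (convPow α n) γ g ≤ lmeanDefect p (convPow β n) γ g +
      n * (ENNReal.ofReal (2 * (p g + meanLength p γ)) * ∑' g, ‖α g - β g‖ₑ) :=
    lexpect_convPow_le_add hα.prob hβ.prob n fun a => lexpect_groupDefect_le hγ a g
  have h_error : (n : ℝ≥0∞) * (ENNReal.ofReal (2 * (p g + meanLength p γ)) *
      ∑' g, ‖α g - β g‖ₑ) ≤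
      ENNReal.ofReal (n * (2 * (p g + meanLength p γ) * norm01 p (α - β))) := by
    rw [ENNReal.ofReal_mul n.cast_nonneg, ENNReal.ofReal_mul h_nonneg, ENNReal.ofReal_natCast]
    gcongr
    exact (hα.hasFiniteNorm01.sub hβ.hasFiniteNorm01).tsum_enorm_le
  refine (ENNReal.toReal_le_add (h_lmean.trans (add_le_add_right h_error _))
    (lmeanDefect_ne_top (hβ.prob.convPow n) hγ g) ENNReal.ofReal_ne_top).trans_eq ?_
  rw [ENNReal.toReal_ofReal (mul_nonneg n.cast_nonneg (mul_nonneg h_nonneg (norm01_nonneg p _))),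
    meanDefect]

lemma abs_meanDefect_convPow_sub_le (hα : IsIntegrableProb p α) (hβ : IsIntegrableProb p β)
    (hγ : IsIntegrableProb p γ) (n : ℕ) (g : G) :
    |meanDefect p (convPow α n) γ g - meanDefect p (convPow β n) γ g| ≤
      n * (2 * (1 + meanLength p γ)) * norm01 p (α - β) * (1 + p g) := by
  have h_left := meanDefect_convPow_le_add hα hβ hγ n g
  have h_right := meanDefect_convPow_le_add hβ hα hγ n g
  rw [norm01_sub_comm] at h_right
  refine (abs_sub_le_iff.2 ⟨sub_le_iff_le_add'.2 h_left, sub_le_iff_le_add'.2 h_right⟩).trans ?_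
  have h_linear : 2 * (p g + meanLength p γ) ≤ 2 * (1 + meanLength p γ) * (1 + p g) := by
    nlinarith [mul_nonneg (meanLength_nonneg p γ) (apply_nonneg p g)]
  nlinarith [mul_le_mul_of_nonneg_left h_linear
    (mul_nonneg n.cast_nonneg (norm01_nonneg p (α - β)))]

/-- The filter of integrable probability measures converging to `μ` in the norm `‖·‖_{0,1}`. -/
noncomputable def nhds01 (p : GroupSeminorm G) (μ : G → ℝ) : Filter (G → ℝ) :=
  comap (fun α => norm01 p (α - μ)) (𝓝 0) ⊓ 𝓟 {α | IsIntegrableProb p α}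

lemma tendsto_norm01_sub_nhds01 (p : GroupSeminorm G) (μ : G → ℝ) :
    Tendsto (fun α => norm01 p (α - μ)) (nhds01 p μ) (𝓝 0) :=
  tendsto_comap.mono_left inf_le_left

lemma eventually_isIntegrableProb_nhds01 (p : GroupSeminorm G) (μ : G → ℝ) :
    ∀ᶠ α in nhds01 p μ, IsIntegrableProb p α :=
  mem_inf_of_right (mem_principal_self _)

lemma pure_le_nhds01 (hμ : IsIntegrableProb p μ) : pure μ ≤ nhds01 p μ := by
  have h_norm : norm01 p (μ - μ) = 0 := by rw [sub_self, norm01_zero]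
  refine le_inf (map_le_iff_le_comap.1 ?_) ((pure_le_principal _).2 hμ)
  rw [Filter.map_pure, h_norm]
  exact pure_le_nhds 0

/-- The mean defects between `n` letters of law `α` on the left and `n` letters of law `μ` on the
right are Cauchy, uniformly in the middle letter and in `α` close to `μ`. -/
def HasUniformlyCauchyMeanDefect (p : GroupSeminorm G) (μ : G → ℝ) : Prop :=
  ∀ e > 0, ∀ᶠ N in atTop, ∀ᶠ α in nhds01 p μ, ∀ k j, N ≤ k → N ≤ j → ∀ g,
    |meanDefect p (convPow α k) (convPow μ j) g - meanDefect p (convPow α N) (convPow μ N) g| ≤ e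

/-- The mean defect of a middle letter `g` between the two halves of a bi-infinite sequence of
independent letters of law `μ`. -/
noncomputable def limMeanDefect (p : GroupSeminorm G) (μ : G → ℝ) (g : G) : ℝ :=
  limUnder atTop fun n => meanDefect p (convPow μ n) (convPow μ n) g

lemma HasUniformlyCauchyMeanDefect.tendstoUniformly (h : HasUniformlyCauchyMeanDefect p μ)
    (hμ : IsIntegrableProb p μ) :
    TendstoUniformly (fun n => meanDefect p (convPow μ n) (convPow μ n)) (limMeanDefect p μ)
      atTop := by
  have h_cauchy : ∀ e > 0, ∃ N, ∀ n ≥ N, ∀ g, |meanDefect p (convPow μ n) (convPow μ n) g -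
      meanDefect p (convPow μ N) (convPow μ N) g| ≤ e := fun e he => by
    obtain ⟨N, hN⟩ := (h e he).exists
    exact ⟨N, fun n hn => eventually_pure.1 (pure_le_nhds01 hμ hN) n n hn hn⟩
  have h_uniform : UniformCauchySeqOn (fun n => meanDefect p (convPow μ n) (convPow μ n)) atTop
      Set.univ := Metric.uniformCauchySeqOn_iff.2 fun e he => by
    obtain ⟨N, hN⟩ := h_cauchy (e / 3) (by positivity)
    refine ⟨N, fun m hm n hn g _ => ?_⟩
    rw [Real.dist_eq, ← sub_sub_sub_cancel_right _ _ (meanDefect p (convPow μ N) (convPow μ N) g)]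
    linarith [abs_sub (meanDefect p (convPow μ m) (convPow μ m) g -
      meanDefect p (convPow μ N) (convPow μ N) g) (meanDefect p (convPow μ n) (convPow μ n) g -
      meanDefect p (convPow μ N) (convPow μ N) g), hN m hm g, hN n hn g]
  rw [← tendstoUniformlyOn_univ]
  exact h_uniform.tendstoUniformlyOn_of_tendsto fun g hg =>
    (h_uniform.cauchySeq hg).tendsto_limUnder

lemma HasUniformlyCauchyMeanDefect.exists_abs_limMeanDefect_le
    (h : HasUniformlyCauchyMeanDefect p μ) (hμ : IsIntegrableProb p μ) :
    ∃ C, ∀ g, |limMeanDefect p μ g| ≤ C * (1 + p g) := by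
  obtain ⟨N, hN⟩ := (Metric.tendstoUniformly_iff.1 (h.tendstoUniformly hμ) 1 one_pos).exists
  refine ⟨2 * (1 + N * (meanLength p μ + meanLength p μ)) + 1, fun g => ?_⟩
  have h_dist := hN g
  have h_N := abs_meanDefect_convPow_le hμ hμ (.inl (le_refl N)) (j := N) g
  rw [Real.dist_eq] at h_dist
  linarith [abs_sub_abs_le_abs_sub (limMeanDefect p μ g)
    (meanDefect p (convPow μ N) (convPow μ N) g), apply_nonneg p g]

lemma HasUniformlyCauchyMeanDefect.exists_abs_sub_limMeanDefect_le
    (h : HasUniformlyCauchyMeanDefect p μ) (hμ : IsIntegrableProb p μ) :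
    ∃ C, ∀ g, |p g - limMeanDefect p μ g| ≤ C * (1 + p g) := by
  obtain ⟨C, hC⟩ := h.exists_abs_limMeanDefect_le hμ
  refine ⟨1 + C, fun g => (abs_sub _ _).trans ?_⟩
  rw [abs_of_nonneg (apply_nonneg p g)]
  linarith [hC g]

lemma HasUniformlyCauchyMeanDefect.tendsto_tsum_mul_meanDefect
    (h : HasUniformlyCauchyMeanDefect p μ) (hμ : IsIntegrableProb p μ)
    (hη : HasFiniteNorm01 p η) :
    Tendsto (fun n => ∑' g, η g * meanDefect p (convPow μ n) (convPow μ n) g) atTop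
      (𝓝 (∑' g, η g * limMeanDefect p μ g)) := by
  obtain ⟨C, hC⟩ := h.exists_abs_limMeanDefect_le hμ
  have h_lim := h.tendstoUniformly hμ
  refine tendsto_tsum_of_dominated_convergence (hη.mul_left (C + 1))
    (fun g => (h_lim.tendsto_at g).const_mul _) ?_
  filter_upwards [Metric.tendstoUniformly_iff.1 h_lim 1 one_pos] with n hn
  refine norm_mul_le_of_abs_le (fun g => ?_) η
  have h_dist := hn g
  rw [dist_comm, Real.dist_eq] at h_dist
  linarith [abs_sub_abs_le_abs_sub (meanDefect p (convPow μ n) (convPow μ n) g)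
    (limMeanDefect p μ g), hC g, apply_nonneg p g]

lemma HasUniformlyCauchyMeanDefect.tsum_mul_sub_limMeanDefect
    (h : HasUniformlyCauchyMeanDefect p μ) (hμ : IsIntegrableProb p μ)
    (hη : HasFiniteNorm01 p η) :
    ∑' g, η g * (p g - limMeanDefect p μ g) =
      ∑' g, η g * p g - ∑' g, η g * limMeanDefect p μ g := by
  obtain ⟨C, hC⟩ := h.exists_abs_limMeanDefect_le hμ
  have h_length : Summable fun g => η g * p g := hη.summable_mul (C := 1) fun g => by
    rw [abs_of_nonneg (apply_nonneg p g)]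
    linarith
  simp only [mul_sub, h_length.tsum_sub (hη.summable_mul hC)]

lemma HasUniformlyCauchyMeanDefect.isLittleO_drift_sub (h : HasUniformlyCauchyMeanDefect p μ)
    (hμ : IsIntegrableProb p μ) :
    (fun α => drift p α - drift p μ - ∑' g, (α - μ) g * (p g - limMeanDefect p μ g)) =o[nhds01 p μ]
      fun α => norm01 p (α - μ) := by
  obtain ⟨C, hC⟩ := h.exists_abs_sub_limMeanDefect_le hμ
  refine Asymptotics.isLittleO_iff.2 fun c hc => ?_
  obtain ⟨N, h_cauchy, h_lim⟩ := ((h (c / 4) (by positivity)).and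
    (Metric.tendstoUniformly_iff.1 (h.tendstoUniformly hμ) (c / 4) (by positivity))).exists
  set K := N * (2 * (1 + meanLength p (convPow μ N)))
  have h_small : ∀ᶠ α in nhds01 p μ, K * norm01 p (α - μ) ≤ c / 4 :=
    ((tendsto_norm01_sub_nhds01 p μ).const_mul K).eventually_le_const (by rw [mul_zero]; positivity)
  filter_upwards [eventually_isIntegrableProb_nhds01 p μ, h_cauchy, h_small]
    with α hα hα_cauchy hα_small
  have h_drift := abs_drift_sub_drift_sub_le hα hμ hα_cauchy
  have h_linear : |∑' g, (α - μ) g * (p g - meanDefect p (convPow α N) (convPow μ N) g) -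
      ∑' g, (α - μ) g * (p g - limMeanDefect p μ g)| ≤ c / 2 * norm01 p (α - μ) := by
    refine (hα.hasFiniteNorm01.sub hμ.hasFiniteNorm01).abs_tsum_mul_sub_tsum_mul_le
      (abs_sub_meanDefect_le (hα.prob.convPow N) (hμ.convPow N)) hC fun g => ?_
    have h_cont := abs_meanDefect_convPow_sub_le hα hμ (hμ.convPow N) N g
    have h_dist := h_lim g
    rw [Real.dist_eq] at h_dist
    have hp := apply_nonneg p g
    rw [sub_sub_sub_cancel_left]
    calc |limMeanDefect p μ g - meanDefect p (convPow α N) (convPow μ N) g|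
        ≤ c / 4 + K * norm01 p (α - μ) * (1 + p g) := by
          rw [abs_sub_comm] at h_cont
          exact (abs_sub_le _ _ _).trans (add_le_add h_dist.le h_cont)
      _ ≤ c / 4 * (1 + p g) + c / 4 * (1 + p g) := by gcongr; nlinarith
      _ = c / 2 * (1 + p g) := by ring
  rw [Real.norm_eq_abs, Real.norm_of_nonneg (norm01_nonneg p _)]
  calc _ ≤ c / 4 * norm01 p (α - μ) + c / 2 * norm01 p (α - μ) :=
        (abs_sub_le _ _ _).trans (add_le_add h_drift h_linear)
    _ ≤ c * norm01 p (α - μ) := by nlinarith [norm01_nonneg p (α - μ)]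

/-- The curve `c` of signed measures passes through integrable probability measures near `t₀` and
is differentiable at `t₀`, with derivative `η`, for the norm `‖·‖_{0,1}`. -/
structure HasDerivNorm01At (p : GroupSeminorm G) (c : ℝ → G → ℝ) (η : G → ℝ) (t₀ : ℝ) : Prop where
  isIntegrableProb : ∀ᶠ t in 𝓝 t₀, IsIntegrableProb p (c t)
  hasFiniteNorm01 : HasFiniteNorm01 p η
  isLittleO : (fun t => norm01 p (c t - c t₀ - (t - t₀) • η)) =o[𝓝 t₀] fun t => t - t₀

namespace HasDerivNorm01At

variable {c : ℝ → G → ℝ} {t₀ : ℝ}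

lemma eventually_hasFiniteNorm01 (hc : HasDerivNorm01At p c η t₀) :
    ∀ᶠ t in 𝓝 t₀, HasFiniteNorm01 p (c t - c t₀ - (t - t₀) • η) := by
  filter_upwards [hc.isIntegrableProb] with t ht
  exact (ht.hasFiniteNorm01.sub hc.isIntegrableProb.self_of_nhds.hasFiniteNorm01).sub
    (hc.hasFiniteNorm01.smul _)

lemma isBigO_norm01_sub (hc : HasDerivNorm01At p c η t₀) :
    (fun t => norm01 p (c t - c t₀)) =O[𝓝 t₀] fun t => t - t₀ := by
  have h_linear : (fun t => |t - t₀| * norm01 p η) =O[𝓝 t₀] fun t => t - t₀ := by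
    simpa only [mul_comm] using
      ((Asymptotics.isBigO_refl (fun t => t - t₀) (𝓝 t₀)).abs_left.const_mul_left (norm01 p η))
  refine .trans (.of_norm_eventuallyLE ?_) (hc.isLittleO.isBigO.add h_linear)
  filter_upwards [hc.eventually_hasFiniteNorm01] with t ht
  rw [Real.norm_of_nonneg (norm01_nonneg p _), ← norm01_smul]
  simpa only [sub_add_cancel] using ht.norm01_add_le (hc.hasFiniteNorm01.smul (t - t₀))

lemma tendsto_nhds01 (hc : HasDerivNorm01At p c η t₀) : Tendsto c (𝓝 t₀) (nhds01 p (c t₀)) := by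
  have h_zero : Tendsto (fun t => t - t₀) (𝓝 t₀) (𝓝 0) := by
    simpa only [sub_self] using (continuous_sub_right t₀).tendsto t₀
  exact tendsto_inf.2 ⟨tendsto_comap_iff.2 (hc.isBigO_norm01_sub.trans_tendsto h_zero),
    tendsto_principal.2 hc.isIntegrableProb⟩

lemma isLittleO_tsum_mul_sub (hc : HasDerivNorm01At p c η t₀) {f : G → ℝ} {C : ℝ}
    (hf : ∀ g, |f g| ≤ C * (1 + p g)) :
    (fun t => ∑' g, (c t - c t₀) g * f g - (t - t₀) * ∑' g, η g * f g) =o[𝓝 t₀]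
      fun t => t - t₀ := by
  refine Asymptotics.IsBigO.trans_isLittleO (.of_bound C ?_) hc.isLittleO
  filter_upwards [hc.isIntegrableProb, hc.eventually_hasFiniteNorm01] with t ht h_fin
  have h_diff : HasFiniteNorm01 p (c t - c t₀) :=
    ht.hasFiniteNorm01.sub hc.isIntegrableProb.self_of_nhds.hasFiniteNorm01
  rw [Real.norm_of_nonneg (norm01_nonneg p _), ← tsum_mul_left,
    ← (h_diff.summable_mul hf).tsum_sub ((hc.hasFiniteNorm01.summable_mul hf).mul_left _)]
  simpa only [Pi.sub_apply, Pi.smul_apply, smul_eq_mul, sub_mul, mul_assoc, Real.norm_eq_abs] using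
    h_fin.abs_tsum_mul_le hf

lemma hasDerivAt_drift (hc : HasDerivNorm01At p c η t₀)
    (h : HasUniformlyCauchyMeanDefect p (c t₀)) :
    HasDerivAt (fun t => drift p (c t)) (∑' g, η g * (p g - limMeanDefect p (c t₀) g)) t₀ := by
  have hμ := hc.isIntegrableProb.self_of_nhds
  obtain ⟨C, hC⟩ := h.exists_abs_sub_limMeanDefect_le hμ
  have h_drift := ((h.isLittleO_drift_sub hμ).comp_tendsto hc.tendsto_nhds01).trans_isBigO
    hc.isBigO_norm01_sub
  refine hasDerivAt_iff_isLittleO.2 ((h_drift.add (hc.isLittleO_tsum_mul_sub hC)).congr_left ?_)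
  intro t
  simp only [Function.comp_apply, smul_eq_mul]
  ring

end HasDerivNorm01At

end Differentiability

section Orbit

variable {G X : Type*} [Group G] [MetricSpace X] [MulAction G X] {o : X}
  {hiso : ∀ g : G, Isometry fun x : X => g • x} {μ α β σ η : G → ℝ}

/-- The displacement `g ↦ d(o, g o)` of the basepoint as a length function on `G`. -/
noncomputable def orbitSeminorm (o : X) (hiso : ∀ g : G, Isometry fun x : X => g • x) :
    GroupSeminorm G where
  toFun g := dist o (g • o)
  map_one' := by rw [one_smul, dist_self]
  mul_le' a b := by
    rw [mul_smul, ← (hiso a).dist_eq o (b • o)]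
    exact dist_triangle _ _ _
  inv' g := by rw [← (hiso g).dist_eq o (g⁻¹ • o), smul_inv_smul, dist_comm]

lemma meanLength_orbitSeminorm (hα : ∀ g, 0 ≤ α g) :
    meanLength (orbitSeminorm o hiso) α = firstMoment o α :=
  toReal_lexpect_ofReal hα fun _ => dist_nonneg

lemma drift_orbitSeminorm (hα : IsProbMeasure α) :
    drift (orbitSeminorm o hiso) α = escapeRate o α := by
  simp only [drift, escapeRate, meanLength_orbitSeminorm (hα.convPow _).1]

lemma isIntegrableProb_orbitSeminorm (hα : IsProbMeasure α) (hL : HasFiniteFirstMoment o α) :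
    IsIntegrableProb (orbitSeminorm o hiso) α :=
  ⟨hα, (lexpect_ofReal_ne_top_iff hα.1 fun _ => dist_nonneg).2 hL⟩

lemma toReal_enorm01 (σ : G → ℝ) : (enorm01 o σ).toReal = norm01 (orbitSeminorm o hiso) σ := by
  rw [enorm01, ENNReal.tsum_toReal_eq fun _ => ENNReal.ofReal_ne_top]
  exact tsum_congr fun g =>
    ENNReal.toReal_ofReal (one_add_seminorm_mul_abs_nonneg (orbitSeminorm o hiso) σ g)

lemma enorm01_ne_top_iff : enorm01 o σ ≠ ⊤ ↔ HasFiniteNorm01 (orbitSeminorm o hiso) σ := by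
  refine ⟨fun h => (ENNReal.summable_toReal h).congr fun g => ?_, Summable.tsum_ofReal_ne_top⟩
  exact ENNReal.toReal_ofReal (one_add_seminorm_mul_abs_nonneg (orbitSeminorm o hiso) σ g)

lemma enorm01_eq_zero_iff : enorm01 o σ = 0 ↔ σ = 0 := by
  have h_pos : ∀ g : G, 0 < 1 + dist o (g • o) := fun g => by positivity
  simp only [enorm01, ENNReal.tsum_eq_zero, ENNReal.ofReal_eq_zero, mul_nonpos_iff,
    (h_pos _).le, (h_pos _).not_ge, abs_nonneg, abs_nonpos_iff]
  simp [funext_iff]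

lemma abs_meanDefect_sub_le_defectDiffExp (hα : IsProbMeasure α)
    (hβ : IsIntegrableProb (orbitSeminorm o hiso) β) (g : G) (n m n' m' : ℕ) :
    |meanDefect (orbitSeminorm o hiso) (convPow α m) (convPow β n) g -
        meanDefect (orbitSeminorm o hiso) (convPow α m') (convPow β n') g| ≤
      defectDiffExp o (fun i => if i < 0 then α else β) g n m n' m' := by
  have h_neg : ∀ j : ℕ, -((j : ℤ) + 1) < 0 := fun j => by lia
  have h_pos : ∀ i : ℕ, ¬ (i : ℤ) + 1 < 0 := fun i => by lia
  simp only [defectDiffExp, h_neg, h_pos, if_true, if_false]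
  exact abs_meanDefect_convPow_sub_le_tsum hα hβ (le_max_left m m') (le_max_left n n')
    (le_max_right m m') (le_max_right n n') g

/-- The uniform `L¹`-Cauchy property of the defects of sequences of independent letters whose laws
are close to `μ`. -/
def HasUniformlyL1CauchyDefect (o : X) (μ : G → ℝ) : Prop :=
  ∃ ε : ℝ, 0 < ε ∧ ∀ ε' : ℝ, 0 < ε' → ∃ N : ℕ, 0 < N ∧ ∀ ν : ℤ → G → ℝ,
    (∀ i : ℤ, i ≠ 0 → IsProbMeasure (ν i) ∧
      enorm01 o (fun h => ν i h - μ h) < ENNReal.ofReal ε) →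
    ∀ g : G, ∀ n m n' m' : ℕ, N ≤ n → N ≤ m → N ≤ n' → N ≤ m' →
      defectDiffExp o ν g n m n' m' < ε'

lemma HasUniformlyL1CauchyDefect.hasUniformlyCauchyMeanDefect
    (h : HasUniformlyL1CauchyDefect o μ) (hμ : IsIntegrableProb (orbitSeminorm o hiso) μ) :
    HasUniformlyCauchyMeanDefect (orbitSeminorm o hiso) μ := fun e he => by
  obtain ⟨ε, hε, h⟩ := h
  obtain ⟨N₀, -, hN₀⟩ := h e he
  filter_upwards [eventually_ge_atTop N₀] with N hN
  filter_upwards [eventually_isIntegrableProb_nhds01 _ μ,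
    (tendsto_norm01_sub_nhds01 _ μ).eventually_lt_const hε] with α hα h_close k j hk hj g
  have h_letters : ∀ i : ℤ, IsProbMeasure (if i < 0 then α else μ) ∧
      enorm01 o ((if i < 0 then α else μ) - μ) < ENNReal.ofReal ε := fun i => by
    split_ifs
    · have h_fin := hα.hasFiniteNorm01.sub hμ.hasFiniteNorm01
      rw [ENNReal.lt_ofReal_iff_toReal_lt (enorm01_ne_top_iff.2 h_fin),
        toReal_enorm01 (hiso := hiso)]
      exact ⟨hα.prob, h_close⟩
    · rw [sub_self, enorm01_eq_zero_iff.2 rfl]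
      exact ⟨hμ.prob, ENNReal.ofReal_pos.2 hε⟩
  exact (abs_meanDefect_sub_le_defectDiffExp hα.prob hμ g j k N N).trans
    (hN₀ _ (fun i _ => h_letters i) g j k N N (hN.trans hj) (hN.trans hk) hN hN).le

namespace IsLittleO01

variable {F : ℝ → G → ℝ}

lemma apply_zero (hF : IsLittleO01 o F) : F 0 = 0 := by
  obtain ⟨δ, hδ, h⟩ := hF 1 one_pos
  have h_zero := h 0 (abs_zero.trans_lt hδ)
  rw [abs_zero, mul_zero, ENNReal.ofReal_zero, nonpos_iff_eq_zero] at h_zero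
  exact enorm01_eq_zero_iff.1 h_zero

lemma eventually_enorm01_le (hF : IsLittleO01 o F) {ε : ℝ} (hε : 0 < ε) :
    ∀ᶠ t in 𝓝 0, enorm01 o (F t) ≤ ENNReal.ofReal (ε * |t|) := by
  obtain ⟨δ, hδ, h⟩ := hF ε hε
  filter_upwards [Metric.ball_mem_nhds 0 hδ] with t ht
  exact h t (by simpa only [Metric.mem_ball, dist_zero_right, Real.norm_eq_abs] using ht)

lemma isLittleO_norm01 (hF : IsLittleO01 o F) :
    (fun t => norm01 (orbitSeminorm o hiso) (F t)) =o[𝓝 0] fun t => t := by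
  refine Asymptotics.isLittleO_iff.2 fun ε hε => ?_
  filter_upwards [hF.eventually_enorm01_le hε] with t ht
  rw [Real.norm_of_nonneg (norm01_nonneg _ _), ← toReal_enorm01, Real.norm_eq_abs]
  exact ENNReal.toReal_le_of_le_ofReal (by positivity) ht

lemma hasDerivNorm01At {c : ℝ → G → ℝ} (hF : IsLittleO01 o fun t => c t - c 0 - t • η)
    (hc : ∀ᶠ t in 𝓝 0, IsProbMeasure (c t)) (hL : HasFiniteFirstMoment o (c 0))
    (hη : HasFiniteNorm01 (orbitSeminorm o hiso) η) :
    HasDerivNorm01At (orbitSeminorm o hiso) c η 0 where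
  isIntegrableProb := by
    have h_zero : HasFiniteNorm01 (orbitSeminorm o hiso) (c 0) :=
      (isIntegrableProb_orbitSeminorm hc.self_of_nhds hL).hasFiniteNorm01
    filter_upwards [hc, hF.eventually_enorm01_le one_pos] with t ht h_le
    have h_fin := (enorm01_ne_top_iff (hiso := hiso)).1
      (ne_top_of_le_ne_top ENNReal.ofReal_ne_top h_le)
    rw [isIntegrableProb_iff ht]
    simpa only [sub_add_cancel] using (h_fin.add (hη.smul t)).add h_zero
  hasFiniteNorm01 := hη
  isLittleO := by simpa only [sub_zero] using hF.isLittleO_norm01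

end IsLittleO01

end Orbit

theorem escape_rate_deriv_squeeze_general
    {G X : Type*} [Group G] [MetricSpace X] [MulAction G X]
    (o : X) (hiso : ∀ g : G, Isometry fun x : X => g • x)
    (μ : G → ℝ) (hL : HasFiniteFirstMoment o μ)
    (η : G → ℝ) (hηfin : enorm01 o η ≠ ⊤)
    (μt : ℝ → G → ℝ) (hμtprob : ∀ᶠ t in 𝓝 0, IsProbMeasure (μt t))
    (hlo : IsLittleO01 o fun t g => μt t g - μ g - t * η g)
    (hCauchy : HasUniformlyL1CauchyDefect o μ) :
    ∃ Δ : ℝ,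
      Filter.Tendsto (fun n : ℕ => ∑' q : G × G × G,
          convPow μ n q.1 * η q.2.1 * convPow μ n q.2.2 * defect o q.1 q.2.1 q.2.2)
        Filter.atTop (𝓝 Δ) ∧
      HasDerivAt (fun t : ℝ => escapeRate o (μt t))
        ((∑' g : G, η g * dist o (g • o)) - Δ) 0 := by
  have h_zero : μt 0 = μ := funext fun g => by
    simpa only [zero_mul, sub_zero, Pi.zero_apply, sub_eq_zero] using congrFun hlo.apply_zero g
  subst h_zero
  let p : GroupSeminorm G := orbitSeminorm o hiso
  have hη : HasFiniteNorm01 p η := enorm01_ne_top_iff.1 hηfin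
  have h_curve : HasDerivNorm01At p μt η 0 := hlo.hasDerivNorm01At hμtprob hL hη
  have hμ : IsIntegrableProb p (μt 0) := h_curve.isIntegrableProb.self_of_nhds
  have h_cauchy : HasUniformlyCauchyMeanDefect p (μt 0) := hCauchy.hasUniformlyCauchyMeanDefect hμ
  refine ⟨∑' g, η g * limMeanDefect p (μt 0) g, ?_, ?_⟩
  · exact (h_cauchy.tendsto_tsum_mul_meanDefect hμ hη).congr fun n =>
      (tsum_mul_groupDefect (hμ.prob.convPow n) (hμ.convPow n) hη).symm
  · have h_deriv := h_curve.hasDerivAt_drift h_cauchy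
    rw [h_cauchy.tsum_mul_sub_limMeanDefect hμ hη] at h_deriv
    exact h_deriv.congr_of_eventuallyEq (hμtprob.mono fun t ht => (drift_orbitSeminorm ht).symm)

/-- Theorem 1.4-type formula: under the uniform `L¹`-Cauchy property of the defects,
the escape rate is differentiable with derivative `E_η d(o,go) − Δ`. -/
theorem escape_rate_deriv_squeeze
    {G X : Type*} [Group G] [Countable G] [MetricSpace X] [MulAction G X]
    (o : X) (hgeo : IsGeodesicSpace X)
    (hiso : ∀ g : G, Isometry fun x : X => g • x)
    (hind : HasIndepContracting G o)
    (μ : G → ℝ) (hμ : IsProbMeasure μ) (hne : NonElementary o μ)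
    (hL : HasFiniteFirstMoment o μ)
    (η : G → ℝ) (hηfin : enorm01 o η ≠ ⊤)
    (μt : ℝ → G → ℝ) (hμtprob : ∀ t ∈ Set.Icc (-1 : ℝ) 1, IsProbMeasure (μt t))
    (hlo : IsLittleO01 o fun t g => μt t g - μ g - t * η g)
    (hCauchy : ∃ ε : ℝ, 0 < ε ∧ ∀ ε' : ℝ, 0 < ε' → ∃ N : ℕ, 0 < N ∧
      ∀ ν : ℤ → G → ℝ,
        (∀ i : ℤ, i ≠ 0 → IsProbMeasure (ν i) ∧
          enorm01 o (fun h => ν i h - μ h) < ENNReal.ofReal ε) →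
        ∀ g : G, ∀ n m n' m' : ℕ, N ≤ n → N ≤ m → N ≤ n' → N ≤ m' →
          defectDiffExp o ν g n m n' m' < ε') :
    ∃ Δ : ℝ,
      Filter.Tendsto (fun n : ℕ => ∑' q : G × G × G,
          convPow μ n q.1 * η q.2.1 * convPow μ n q.2.2 * defect o q.1 q.2.1 q.2.2)
        Filter.atTop (𝓝 Δ) ∧
      HasDerivAt (fun t : ℝ => escapeRate o (μt t))
        ((∑' g : G, η g * dist o (g • o)) - Δ) 0 :=
  escape_rate_deriv_squeeze_general o hiso μ hL η hηfin μt
    (Filter.mem_of_superset (Icc_mem_nhds neg_one_lt_zero one_pos) hμtprob) hlo hCauchy
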